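/- arXiv:2302.04266 — 4 statements merged into one kernel-verified Lean document; each statement's English description precedes it below -/
import Mathlib

section
/- Mountain pass level dominates the first excited level: assume w ∈ A satisfies w > 0 a.e. in Ω, F(w) = Λ₁, and w and −w are the only minimizers of F over A. Let z : [0,∞) → (measurable functions ℝ^N → ℝ) satisfy: (i) z(t) ∈ A for every t ≥ 0 and sup_{t≥0} [z(t)]_s < ∞; (ii) t ↦ z(t) is continuous with respect to the metric d₀ of convergence in measure on Ω; (iii) z(0) = w; (iv) d₀(z(t), −w) → 0 as t → +∞. Then sup_{t≥0} F(z(t)) ≥ Λ₂. -/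
/-!
The proof is by contradiction: suppose that the whole path stays in `K = {F ≤ c}` with `c < Λ₂`.
A critical point in `K` has energy `Λ₁`, so `w` and `-w` are the only critical points in `K`, and it
suffices to show that they lie in different open and closed pieces of `K`.

The fractional Poincaré inequality and the fractional Rellich theorem (`isCompact_gagForm_le`,
proved by comparing a function with its averages on a fine grid) show that `K` is a compact subset
of `L²(ℝ^N)`. On such a set convergence in measure implies convergence in `L²`
(`tendsto_of_tendsto_d0`), so the path is continuous in `L²`.

Instead of a gradient flow, `K` is deformed by the discrete iteration `τ`, where `v = τ(u)` is the
weak solution of `(-Δ)^s v = α |u|^{q-2} u` in `Ω`. Put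
`Ψ(u) = -(α/2) ∫_Ω |u|^{q-2} u τ(u) + α (1 - 1/q) ∫_Ω |u|^q`. Completing the square gives
`F(u) - Ψ(u) = [u - τ(u)]_s^2 / 2 ≥ 0`, and the Young inequality gives `F(τ(u)) ≤ Ψ(u)`. Both `τ`
and `Ψ` are continuous in `L²`, `τ` maps `K` into itself, and `Ψ` strictly decreases along `τ` away
from critical points. Hence each orbit of `τ` in `K` is attracted by `w` or by `-w`, the two basins
of attraction are open (`separation_of_descent`), and they disconnect `K` between `w` and `-w`
(`energy_sublevel_separation`). A continuous path cannot cross, which is the contradiction.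
-/

open MeasureTheory ENNReal Filter

noncomputable section

/-- Euclidean space `ℝ^N`. -/
abbrev E (N : ℕ) : Type := EuclideanSpace ℝ (Fin N)

/-- The squared Gagliardo seminorm `[u]_s^2`, valued in `[0,∞]`. -/
def gagSq (N : ℕ) (s : ℝ) (u : E N → ℝ) : ℝ≥0∞ :=
  ∫⁻ x : E N, ∫⁻ y : E N,
    ENNReal.ofReal ((u x - u y) ^ 2 / dist x y ^ ((N : ℝ) + 2 * s))

/-- The admissible class `A`: measurable functions vanishing a.e. outside `Ω`,
with finite Gagliardo seminorm and `|u|^q` integrable on `Ω`. -/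
def memA (N : ℕ) (s q : ℝ) (Ω : Set (E N)) (u : E N → ℝ) : Prop :=
  Measurable u ∧ (∀ᵐ x : E N, x ∉ Ω → u x = 0) ∧ gagSq N s u < ⊤ ∧
    IntegrableOn (fun x => |u x| ^ q) Ω

/-- The energy functional `F(u) = (1/2)[u]_s^2 − (α/q)∫_Ω |u|^q`. -/
def EF (N : ℕ) (s q α : ℝ) (Ω : Set (E N)) (u : E N → ℝ) : ℝ :=
  (1 / 2) * (gagSq N s u).toReal - (α / q) * ∫ x in Ω, |u x| ^ q

/-- The ground state level `Λ₁ = inf {F(u) : u ∈ A}`. -/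
def Lam1 (N : ℕ) (s q α : ℝ) (Ω : Set (E N)) : ℝ :=
  sInf {c : ℝ | ∃ u, memA N s q Ω u ∧ EF N s q α Ω u = c}

/-- A critical point of `F`: a weak solution of `(−Δ)^s u = α|u|^{q−2}u` in `Ω`. -/
def IsCritPt (N : ℕ) (s q α : ℝ) (Ω : Set (E N)) (u : E N → ℝ) : Prop :=
  memA N s q Ω u ∧ ∀ ψ : E N → ℝ, memA N s q Ω ψ →
    (∫ x : E N, ∫ y : E N,
        (u x - u y) * (ψ x - ψ y) / dist x y ^ ((N : ℝ) + 2 * s)) =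
      α * ∫ x in Ω, |u x| ^ (q - 2) * u x * ψ x

/-- A critical value of `F`. -/
def IsCritVal (N : ℕ) (s q α : ℝ) (Ω : Set (E N)) (c : ℝ) : Prop :=
  ∃ u, IsCritPt N s q α Ω u ∧ EF N s q α Ω u = c

/-- The first excited level `Λ₂ = inf {Λ > Λ₁ : Λ is a critical value of F}`. -/
def Lam2 (N : ℕ) (s q α : ℝ) (Ω : Set (E N)) : ℝ :=
  sInf {c : ℝ | Lam1 N s q α Ω < c ∧ IsCritVal N s q α Ω c}

/-- The cross term `I(u,v) = ∫∫ u(x)v(y)/|x−y|^{N+2s}` (valued in `[0,∞]`). -/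
def crossI (N : ℕ) (s : ℝ) (u v : E N → ℝ) : ℝ≥0∞ :=
  ∫⁻ x : E N, ∫⁻ y : E N,
    ENNReal.ofReal (u x * v y / dist x y ^ ((N : ℝ) + 2 * s))

/-- The metric of convergence in measure on `Ω`. -/
def d0 (N : ℕ) (Ω : Set (E N)) (u v : E N → ℝ) : ℝ :=
  ∫ x in Ω, min 1 |u x - v x|

/-- The power nonlinearity `Φ(t) = |t|^{m−1} t`. -/
def Phi (m t : ℝ) : ℝ := |t| ^ (m - 1) * t

/-- The nonlinearity `g(t) = |t|^{(m−1)/2} t`. -/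
def gfun (m t : ℝ) : ℝ := |t| ^ ((m - 1) / 2) * t

/-! ### Separation of a compact space by a descent map -/

/-- Let `T` be a continuous self-map of a compact Hausdorff space and `Ψ` a continuous function that does not
increase along `T`, with all stationary steps ending in one of two fixed points `a`, `b`, both at
the minimum of `Ψ`. Then the space is the disjoint union of two open sets, one containing `a`, the
other containing `b`. These are the basins of attraction of `a` and `b`. -/
theorem separation_of_descent {X : Type*} [TopologicalSpace X] [CompactSpace X] [T2Space X]
    (T : X → X) (hT : Continuous T) (Ψ : X → ℝ) (hΨ : Continuous Ψ) (a b : X) (hab : a ≠ b)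
    (hTa : T a = a) (hTb : T b = b) (m : ℝ) (hΨa : Ψ a = m) (hΨb : Ψ b = m)
    (hm : ∀ u, m ≤ Ψ u) (hdesc : ∀ u, Ψ (T u) ≤ Ψ u)
    (heq : ∀ u, Ψ (T u) = Ψ u → T u = a ∨ T u = b) :
    ∃ Wa Wb : Set X, IsOpen Wa ∧ IsOpen Wb ∧ Disjoint Wa Wb ∧ Wa ∪ Wb = Set.univ ∧
      a ∈ Wa ∧ b ∈ Wb := by
  obtain ⟨Va, Vb, hVa, hVb, haV, hbV, hV⟩ := t2_separation hab
  set Ua := Va ∩ T ⁻¹' Va with hUa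
  set Ub := Vb ∩ T ⁻¹' Vb with hUb
  have hUao : IsOpen Ua := hVa.inter (hVa.preimage hT)
  have hUbo : IsOpen Ub := hVb.inter (hVb.preimage hT)
  have haU : a ∈ Ua := ⟨haV, by simpa [hTa] using haV⟩
  have hbU : b ∈ Ub := ⟨hbV, by simpa [hTb] using hbV⟩
  have hdis : ∀ x, x ∈ Va → x ∈ Vb → False := fun x h1 h2 => Set.disjoint_left.1 hV h1 h2
  -- A gap above the minimum: almost minimal points are sent by `T` into `Ua ∪ Ub`.
  have hgap : ∃ δ > 0, ∀ u, Ψ u < m + δ → T u ∈ Ua ∪ Ub := by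
    have hC : IsCompact (T ⁻¹' (Ua ∪ Ub))ᶜ :=
      (((hUao.union hUbo).preimage hT).isClosed_compl).isCompact
    rcases Set.eq_empty_or_nonempty (T ⁻¹' (Ua ∪ Ub))ᶜ with h0 | h0
    · refine ⟨1, one_pos, fun u _ => ?_⟩
      by_contra hu
      have : u ∈ (T ⁻¹' (Ua ∪ Ub))ᶜ := hu
      rw [h0] at this
      exact this
    · obtain ⟨u₀, hu₀, hmin⟩ := hC.exists_isMinOn h0 hΨ.continuousOn
      refine ⟨Ψ u₀ - m, ?_, fun u hu => ?_⟩
      · rcases (hm u₀).lt_or_eq with h | h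
        · exact sub_pos.2 h
        · exfalso
          have h1 : Ψ (T u₀) = Ψ u₀ := le_antisymm (hdesc _) (h ▸ hm _)
          apply hu₀
          rcases heq u₀ h1 with h2 | h2
          · left; rw [h2]; exact haU
          · right; rw [h2]; exact hbU
      · by_contra hc
        have := hmin (show u ∈ (T ⁻¹' (Ua ∪ Ub))ᶜ from hc)
        simp only [Set.mem_ofPred_eq] at this
        linarith
  obtain ⟨δ, hδ, hgap⟩ := hgap
  -- `Sa` and `Sb` are forward invariant neighbourhoods of `a` and `b`; the basins are the points
  -- whose orbit enters them.
  set Sa := T ⁻¹' Ua ∩ {u | Ψ u < m + δ} with hSa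
  set Sb := T ⁻¹' Ub ∩ {u | Ψ u < m + δ} with hSb
  have hlow : IsOpen {u | Ψ u < m + δ} := isOpen_lt hΨ continuous_const
  have hSao : IsOpen Sa := (hUao.preimage hT).inter hlow
  have hSbo : IsOpen Sb := (hUbo.preimage hT).inter hlow
  have hSaT : ∀ u ∈ Sa, T u ∈ Sa := by
    rintro u ⟨h1, h2⟩
    have h3 : Ψ (T u) < m + δ := (hdesc u).trans_lt h2
    refine ⟨?_, h3⟩
    rcases hgap _ h3 with h | h
    · exact h
    · exact (hdis _ h1.2 h.1).elim
  have hSbT : ∀ u ∈ Sb, T u ∈ Sb := by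
    rintro u ⟨h1, h2⟩
    have h3 : Ψ (T u) < m + δ := (hdesc u).trans_lt h2
    refine ⟨?_, h3⟩
    rcases hgap _ h3 with h | h
    · exact (hdis _ h.1 h1.2).elim
    · exact h
  have hSaN : ∀ n k u, T^[n] u ∈ Sa → T^[n + k] u ∈ Sa := by
    intro n k u h
    induction k with
    | zero => exact h
    | succ k ih => rw [← add_assoc, Function.iterate_succ_apply']; exact hSaT _ ih
  have hSbN : ∀ n k u, T^[n] u ∈ Sb → T^[n + k] u ∈ Sb := by
    intro n k u h
    induction k with
    | zero => exact h
    | succ k ih => rw [← add_assoc, Function.iterate_succ_apply']; exact hSbT _ ih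
  have hTn : ∀ n, Continuous (T^[n]) := fun n => hT.iterate n
  refine ⟨⋃ n, T^[n] ⁻¹' Sa, ⋃ n, T^[n] ⁻¹' Sb, isOpen_iUnion fun n => hSao.preimage (hTn n),
    isOpen_iUnion fun n => hSbo.preimage (hTn n), ?_, ?_, ?_, ?_⟩
  · rw [Set.disjoint_left]
    intro u h1 h2
    obtain ⟨i, hi⟩ := Set.mem_iUnion.1 h1
    obtain ⟨j, hj⟩ := Set.mem_iUnion.1 h2
    have h1 := hSaN i j u hi
    have h2 := hSbN j i u hj
    rw [add_comm] at h2
    exact hdis _ h1.1.1 h2.1.1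
  · refine Set.eq_univ_of_forall fun u => ?_
    -- Every orbit accumulates at a point `x` with `Ψ (T x) = Ψ x`.
    have hanti : Antitone fun n => Ψ (T^[n] u) := antitone_nat_of_succ_le fun n => by
      rw [Function.iterate_succ_apply']; exact hdesc _
    have hlim := tendsto_atTop_ciInf hanti ⟨m, by rintro _ ⟨n, rfl⟩; exact hm _⟩
    set l := ⨅ n, Ψ (T^[n] u)
    obtain ⟨x, hx⟩ := exists_clusterPt_of_compactSpace (map (fun n => T^[n] u) atTop)
    have hx' : MapClusterPt x atTop (fun n => T^[n] u) := hx
    have key : ∀ f : X → ℝ, Continuous f → Tendsto (fun n => f (T^[n] u)) atTop (nhds l) →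
        f x = l := by
      intro f hf hfl
      have h1 : MapClusterPt (f x) atTop (fun n => f (T^[n] u)) :=
        hx'.continuousAt_comp hf.continuousAt
      have : (nhds (f x) ⊓ map (fun n => f (T^[n] u)) atTop).NeBot := h1
      exact eq_of_nhds_neBot (neBot_of_le (inf_le_inf_left (nhds (f x)) hfl))
    have h1 : Ψ x = l := key Ψ hΨ hlim
    have h2 : Ψ (T x) = l := by
      refine key (Ψ ∘ T) (hΨ.comp hT) ?_
      have := hlim.comp (tendsto_add_atTop_nat 1)
      refine this.congr fun n => ?_
      simp [Function.iterate_succ_apply']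
    have h3 : T x = a ∨ T x = b := heq x (h2.trans h1.symm)
    have h4 : x ∈ Sa ∪ Sb := by
      have hxm : Ψ x = m := by
        rw [h1, ← h2]; rcases h3 with h | h <;> rw [h] <;> assumption
      rcases h3 with h | h
      · left; exact ⟨by simpa [h] using haU, by simp [hxm, hδ]⟩
      · right; exact ⟨by simpa [h] using hbU, by simp [hxm, hδ]⟩
    obtain ⟨n, hn⟩ := (hx'.frequently ((hSao.union hSbo).mem_nhds h4)).exists
    rcases hn with h | h
    · left; exact Set.mem_iUnion.2 ⟨n, h⟩
    · right; exact Set.mem_iUnion.2 ⟨n, h⟩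
  · exact Set.mem_iUnion.2 ⟨0, by simpa [hSa, hTa, hΨa, hδ] using haU⟩
  · exact Set.mem_iUnion.2 ⟨0, by simpa [hSb, hTb, hΨb, hδ] using hbU⟩

/-! ### Sublinear variational problems in an abstract inner product space -/

section Abstract

variable {H : Type*} [NormedAddCommGroup H] [InnerProductSpace ℝ H] {V : Submodule ℝ H}
  {B : LinearMap.BilinForm ℝ V}

/-- A continuous perturbation of `B v v / 2` has compact sublevel sets in `H`, as soon as these have
bounded energy: closedness expresses the lower semicontinuity of `v ↦ B v v`. -/
theorem isCompact_sublevel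
    (hcomp : ∀ M : ℝ, IsCompact ((fun v : V => (v : H)) '' {v : V | B v v ≤ M}))
    {g : H → ℝ} (hg : Continuous g) {c M : ℝ}
    (hM : ∀ v : V, (1 / 2) * B v v - g v ≤ c → B v v ≤ M) :
    IsCompact ((fun v : V => (v : H)) '' {v : V | (1 / 2) * B v v - g v ≤ c}) := by
  refine (hcomp M).of_isClosed_subset ?_ (Set.image_mono fun v hv => hM v hv)
  refine IsSeqClosed.isClosed fun x u hx hxu => ?_
  have hgx : Tendsto (fun n => g (x n)) atTop (nhds (g u)) := (hg.tendsto u).comp hxu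
  have key : ∀ ε > 0, ∃ v : V, (v : H) = u ∧ B v v ≤ 2 * c + 2 * g u + ε := by
    intro ε hε
    have hmem : u ∈ ((fun v : V => (v : H)) '' {v : V | B v v ≤ 2 * c + 2 * g u + ε}) := by
      refine (hcomp _).isClosed.mem_of_tendsto hxu ?_
      have : ∀ᶠ n in atTop, g (x n) < g u + ε / 2 := hgx.eventually_lt_const (by linarith)
      filter_upwards [this] with n hn
      obtain ⟨v, hv, hvx⟩ := hx n
      refine ⟨v, ?_, hvx⟩
      have hv' : (1 / 2) * B v v - g v ≤ c := hv
      have hvx' : (v : H) = x n := hvx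
      rw [hvx'] at hv'
      change B v v ≤ _
      linarith
    obtain ⟨v, hv, hvu⟩ := hmem
    exact ⟨v, hvu, hv⟩
  obtain ⟨v, hvu, -⟩ := key 1 one_pos
  refine ⟨v, ?_, hvu⟩
  have h2 : B v v ≤ 2 * c + 2 * g u := by
    refine le_of_forall_pos_le_add fun ε hε => ?_
    obtain ⟨v', hv', h⟩ := key ε hε
    have : v' = v := Subtype.ext (hv'.trans hvu.symm)
    rwa [this] at h
  change (1 / 2) * B v v - g v ≤ c
  rw [show (v : H) = u from hvu]
  linarith

/-- The direct method for the quadratic functional `v ↦ B v v / 2 - ⟪g, v⟫`. -/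
theorem exists_minimizer
    (hcomp : ∀ M : ℝ, IsCompact ((fun v : V => (v : H)) '' {v : V | B v v ≤ M}))
    {C : ℝ} (hC : 0 < C) (hP : ∀ v : V, ‖(v : H)‖ ^ 2 ≤ C * B v v) (g : H) :
    ∃ v : V, ∀ u : V, (1 / 2) * B v v - inner ℝ g (v : H) ≤ (1 / 2) * B u u - inner ℝ g (u : H) := by
  set J : V → ℝ := fun v => (1 / 2) * B v v - inner ℝ g (v : H) with hJ
  have hlow : ∀ v : V, (1 / 4) * B v v - C * ‖g‖ ^ 2 ≤ J v := by
    intro v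
    have h1 : inner ℝ g (v : H) ≤ ‖g‖ * ‖(v : H)‖ := real_inner_le_norm _ _
    have h2 := hP v
    have h4 : ‖(v : H)‖ ^ 2 / C ≤ B v v := by rw [div_le_iff₀ hC]; linarith
    have h5 : 0 ≤ (‖(v : H)‖ / C - 2 * ‖g‖) ^ 2 * C := by positivity
    have h6 : (‖(v : H)‖ / C - 2 * ‖g‖) ^ 2 * C =
        ‖(v : H)‖ ^ 2 / C - 4 * (‖g‖ * ‖(v : H)‖) + 4 * (C * ‖g‖ ^ 2) := by
      field_simp; ring
    simp only [hJ]
    nlinarith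
  have hBnn : ∀ v : V, 0 ≤ B v v := fun v => by
    have := hP v
    have h0 : 0 ≤ ‖(v : H)‖ ^ 2 := by positivity
    exact nonneg_of_mul_nonneg_right (h0.trans this) hC
  have hbdd : BddBelow (Set.range J) := ⟨-(C * ‖g‖ ^ 2), by
    rintro _ ⟨v, rfl⟩; linarith [hlow v, hBnn v]⟩
  have hcJ : ∀ c : ℝ, IsCompact ((fun v : V => (v : H)) '' {v : V | J v ≤ c}) := fun c =>
    isCompact_sublevel hcomp (g := fun u => inner ℝ g u) (M := 4 * c + 4 * (C * ‖g‖ ^ 2))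
      (continuous_const.inner continuous_id) (fun v hv => by
        have h1 : J v ≤ c := hv
        linarith [hlow v])
  set c₀ := ⨅ v, J v with hc₀
  have hne : ∀ n : ℕ, ∃ v : V, J v < c₀ + 1 / ((n : ℝ) + 1) := fun n =>
    exists_lt_of_ciInf_lt (lt_add_of_pos_right _ Nat.one_div_pos_of_nat)
  choose x hx using hne
  have hx1 : ∀ n, (x n : H) ∈ ((fun v : V => (v : H)) '' {v : V | J v ≤ c₀ + 1}) := fun n =>
    ⟨x n, (hx n).le.trans (by
      have : 1 / ((n : ℝ) + 1) ≤ 1 := by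
        rw [div_le_one (by positivity)]; linarith [n.cast_nonneg (α := ℝ)]
      linarith), rfl⟩
  obtain ⟨u, ⟨v, -, hvu⟩, φ, hφ, hlim⟩ := (hcJ (c₀ + 1)).tendsto_subseq hx1
  refine ⟨v, fun u' => ?_⟩
  have hv : J v ≤ c₀ := by
    refine le_of_forall_pos_le_add fun ε hε => ?_
    have hmem : u ∈ ((fun v : V => (v : H)) '' {v : V | J v ≤ c₀ + ε}) := by
      refine (hcJ _).isClosed.mem_of_tendsto hlim ?_
      have h1 : Tendsto (fun n : ℕ => 1 / (((φ n : ℕ) : ℝ) + 1)) atTop (nhds 0) :=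
        (tendsto_one_div_add_atTop_nhds_zero_nat (𝕜 := ℝ)).comp hφ.tendsto_atTop
      filter_upwards [h1.eventually_lt_const hε] with n hn
      exact ⟨x (φ n), by have := hx (φ n); change J _ ≤ _; linarith, rfl⟩
    obtain ⟨v', hv', h⟩ := hmem
    have : v' = v := Subtype.ext (h.trans hvu.symm)
    rwa [this] at hv'
  exact hv.trans (ciInf_le hbdd u')

/-- Solvability of the linear problem `B v ψ = ⟪g, ψ⟫`. Completeness of `V` for `B` is not assumed;
it is replaced by the compactness of the sublevel sets of `B`. -/
theorem exists_weak_solution (hsymm : ∀ u v : V, B u v = B v u)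
    (hcomp : ∀ M : ℝ, IsCompact ((fun v : V => (v : H)) '' {v : V | B v v ≤ M}))
    {C : ℝ} (hC : 0 < C) (hP : ∀ v : V, ‖(v : H)‖ ^ 2 ≤ C * B v v) (g : H) :
    ∃ v : V, ∀ ψ : V, B v ψ = inner ℝ g (ψ : H) := by
  obtain ⟨v, hv⟩ := exists_minimizer hcomp hC hP g
  refine ⟨v, fun ψ => ?_⟩
  have h : ∀ t : ℝ, 0 ≤ (B ψ ψ / 2) * (t * t) + (B v ψ - inner ℝ g (ψ : H)) * t + 0 := by
    intro t
    have h1 := hv (v + t • ψ)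
    simp only [map_add, LinearMap.add_apply, map_smul, LinearMap.smul_apply, smul_eq_mul,
      Submodule.coe_add, Submodule.coe_smul, inner_add_right, inner_smul_right] at h1
    rw [hsymm ψ v] at h1
    linarith
  have := discrim_le_zero h
  rw [discrim] at this
  nlinarith [sq_nonneg (B v ψ - inner ℝ g (ψ : H))]

/-- The functional `B v v / 2 - (α/q) ⟪n v, v⟫` is bounded below and has compact sublevel sets
in `H`, since its lower order term is subquadratic. -/
theorem isCompact_energy_sublevel
    (hcomp : ∀ M : ℝ, IsCompact ((fun v : V => (v : H)) '' {v : V | B v v ≤ M}))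
    {C : ℝ} (hC : 0 < C) (hP : ∀ v : V, ‖(v : H)‖ ^ 2 ≤ C * B v v)
    {α q : ℝ} (hα : 0 < α) (hq : 1 < q) {n : H → H} (hn : Continuous n)
    (hcoer : ∀ η > 0, ∃ R, ∀ u, inner ℝ (n u) u ≤ η * ‖u‖ ^ 2 + R) :
    ∃ b : ℝ, (∀ v : V, b ≤ (1 / 2) * B v v - (α / q) * inner ℝ (n v) (v : H)) ∧
    ∀ c : ℝ, IsCompact ((fun v : V => (v : H)) ''
      {v : V | (1 / 2) * B v v - (α / q) * inner ℝ (n v) (v : H) ≤ c}) := by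
  have hq0 : 0 < q := by linarith
  obtain ⟨R, hR⟩ := hcoer (q / (4 * α * C)) (by positivity)
  have hlow : ∀ v : V, (1 / 4) * B v v - (α / q) * R ≤
      (1 / 2) * B v v - (α / q) * inner ℝ (n v) (v : H) := by
    intro v
    have h1 := mul_le_mul_of_nonneg_left (hR v) (show 0 ≤ α / q by positivity)
    have h2 : (α / q) * (q / (4 * α * C) * ‖(v : H)‖ ^ 2 + R) =
        ‖(v : H)‖ ^ 2 / (4 * C) + (α / q) * R := by field_simp
    have h3 : ‖(v : H)‖ ^ 2 / (4 * C) ≤ (1 / 4) * B v v := by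
      rw [div_le_iff₀ (by positivity)]; linarith [hP v]
    linarith
  have hBnn : ∀ v : V, 0 ≤ B v v := fun v => by
    have h0 : 0 ≤ ‖(v : H)‖ ^ 2 := by positivity
    exact nonneg_of_mul_nonneg_right (h0.trans (hP v)) hC
  refine ⟨-((α / q) * R), fun v => by linarith [hlow v, hBnn v], fun c => ?_⟩
  exact isCompact_sublevel hcomp (g := fun u => (α / q) * inner ℝ (n u) u)
    (M := 4 * c + 4 * ((α / q) * R)) (continuous_const.mul (hn.inner continuous_id))
    (fun v hv => by linarith [hlow v])

/-- If the only critical points in the sublevel set `{F ≤ c}` are the two minimizers `a` and `b`, then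
no path that is continuous in `H` and stays in `{F ≤ c}` joins `a` to `b`. -/
theorem energy_sublevel_separation (hsymm : ∀ u v : V, B u v = B v u)
    (hcomp : ∀ M : ℝ, IsCompact ((fun v : V => (v : H)) '' {v : V | B v v ≤ M}))
    {C : ℝ} (hC : 0 < C) (hP : ∀ v : V, ‖(v : H)‖ ^ 2 ≤ C * B v v)
    {α q : ℝ} (hα : 0 < α) {n : H → H} (hn : Continuous n)
    (hyoung : ∀ u v : H, inner ℝ (n u) v ≤
      (1 - 1 / q) * inner ℝ (n u) u + (1 / q) * inner ℝ (n v) v)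
    (F : V → ℝ) (hF : ∀ v, F v = (1 / 2) * B v v - (α / q) * inner ℝ (n v) (v : H))
    {c m : ℝ} (hK : IsCompact ((fun v : V => (v : H)) '' {v : V | F v ≤ c}))
    (a b : V) (hab : a ≠ b) (ha : F a = m) (hb : F b = m) (hm : ∀ v, m ≤ F v)
    (hcrit : ∀ v : V, F v ≤ c → (∀ ψ : V, B v ψ = α * inner ℝ (n v) (ψ : H)) → v = a ∨ v = b)
    (z : ℝ → H) (hz : Continuous z) (hzK : ∀ t, z t ∈ (fun v : V => (v : H)) '' {v : V | F v ≤ c})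
    (hz0 : z 0 = a) (hzlim : Tendsto z atTop (nhds (b : H))) : False := by
  set K : Set H := (fun v : V => (v : H)) '' {v : V | F v ≤ c} with hKdef
  have : CompactSpace K := isCompact_iff_compactSpace.1 hK
  choose S hS using exists_weak_solution hsymm hcomp hC hP
  -- `S g` depends on `g` in a Lipschitz way, by the Poincaré inequality.
  have hSlip : ∀ g g' : H, ‖(S g : H) - S g'‖ ≤ C * ‖g - g'‖ := by
    intro g g'
    have h1 : B (S g - S g') (S g - S g') = inner ℝ (g - g') ((S g : H) - S g') := by
      rw [LinearMap.map_sub₂, hS, hS, inner_sub_left]; rfl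
    have h2 := hP (S g - S g')
    have h3 := real_inner_le_norm (g - g') ((S g : H) - S g')
    rw [h1] at h2
    have h4 : ‖(S g : H) - S g'‖ ^ 2 ≤ C * (‖g - g'‖ * ‖(S g : H) - S g'‖) :=
      h2.trans (mul_le_mul_of_nonneg_left h3 hC.le)
    by_contra hc
    push Not at hc
    have h5 : 0 < ‖(S g : H) - S g'‖ := lt_of_le_of_lt (by positivity) hc
    nlinarith
  have hScont : Continuous fun g => (S g : H) := by
    refine (LipschitzWith.of_dist_le_mul (K := ⟨C, hC.le⟩) fun g g' => ?_).continuous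
    rw [dist_eq_norm, dist_eq_norm]; exact hSlip g g'
  -- One step `u ↦ τ u` of the iteration: solve the linear problem with right-hand side `α n(u)`.
  set τ : H → V := fun u => S (α • n u) with hτ
  have hτcont : Continuous fun u => (τ u : H) := hScont.comp (hn.const_smul α)
  have hτw : ∀ u (ψ : V), B (τ u) ψ = α * inner ℝ (n u) (ψ : H) := fun u ψ => by
    rw [hτ, hS, real_inner_smul_left]
  -- Unlike `F`, the functional `Ψ` is continuous in `H`; it satisfies `F (τ u) ≤ Ψ u ≤ F u`.
  set Ψ : H → ℝ := fun u =>
    -(1 / 2) * (α * inner ℝ (n u) (τ u : H)) + α * (1 - 1 / q) * inner ℝ (n u) u with hΨ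
  have hΨcont : Continuous Ψ :=
    (continuous_const.mul (continuous_const.mul (hn.inner hτcont))).add
      (continuous_const.mul (hn.inner continuous_id))
  have hFτ : ∀ u, F (τ u) ≤ Ψ u := by
    intro u
    have h1 := mul_le_mul_of_nonneg_left (hyoung u (τ u)) hα.le
    have h2 := hτw u (τ u)
    have h3 : α * ((1 - 1 / q) * inner ℝ (n u) u + (1 / q) * inner ℝ (n (τ u)) (τ u : H)) =
      α * (1 - 1 / q) * inner ℝ (n u) u + (α / q) * inner ℝ (n (τ u)) (τ u : H) := by ring
    rw [hF]
    simp only [hΨ]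
    linarith
  have hΨF : ∀ u : V, F u - Ψ u = (1 / 2) * B (u - τ u) (u - τ u) := by
    intro u
    have h1 := hτw u u
    have h2 := hτw u (τ u)
    rw [hF]
    simp only [hΨ, map_sub, LinearMap.sub_apply]
    rw [hsymm u (τ u), h1, h2]
    ring
  have hBnn : ∀ v : V, 0 ≤ B v v := fun v => by
    have h0 : 0 ≤ ‖(v : H)‖ ^ 2 := by positivity
    exact nonneg_of_mul_nonneg_right (h0.trans (hP v)) hC
  have hΨle : ∀ u : V, Ψ u ≤ F u := fun u => by linarith [hΨF u, hBnn (u - τ u)]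
  have hfix : ∀ u : V, Ψ u = F u → τ u = u := by
    intro u hu
    have h1 : B (u - τ u) (u - τ u) = 0 := by linarith [hΨF u]
    have h2 := hP (u - τ u)
    rw [h1, mul_zero] at h2
    have h3 : ‖((u - τ u : V) : H)‖ = 0 := by
      have := norm_nonneg ((u - τ u : V) : H)
      nlinarith
    have h4 : u - τ u = 0 := Subtype.ext (norm_eq_zero.1 h3)
    exact (sub_eq_zero.1 h4).symm
  have hτmin : ∀ v : V, F v = m → Ψ v = m ∧ τ v = v := by
    intro v hv
    have h1 : Ψ v = m := le_antisymm (hv ▸ hΨle v) ((hm _).trans (hFτ v))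
    exact ⟨h1, hfix v (h1.trans hv.symm)⟩
  have hτK : ∀ u : K, (τ u : H) ∈ K := by
    rintro ⟨_, v, hv, rfl⟩
    exact ⟨τ v, ((hFτ v).trans (hΨle v)).trans hv, rfl⟩
  have hzc : ∀ v : V, F v = m → m ≤ c → (v : H) ∈ K := fun v h1 h2 => ⟨v, h1.le.trans h2, rfl⟩
  have hmc : m ≤ c := by
    obtain ⟨v, hv, -⟩ := hzK 0
    exact (hm v).trans hv
  let T : K → K := fun u => ⟨τ u, hτK u⟩
  let a' : K := ⟨a, hzc a ha hmc⟩
  let b' : K := ⟨b, hzc b hb hmc⟩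
  obtain ⟨Wa, Wb, hWa, hWb, hdisj, hun, haW, hbW⟩ := separation_of_descent T
    (Continuous.subtype_mk (hτcont.comp continuous_subtype_val) _)
    (fun u : K => Ψ u) (hΨcont.comp continuous_subtype_val) a' b'
    (fun h => hab (Subtype.ext (congrArg (fun v : K => (v : H)) h)))
    (Subtype.ext (congrArg (fun v : V => (v : H)) (hτmin a ha).2))
    (Subtype.ext (congrArg (fun v : V => (v : H)) (hτmin b hb).2)) m (hτmin a ha).1 (hτmin b hb).1
    (fun u => (hm _).trans (hFτ u))
    (fun u => (hΨle (τ u)).trans (hFτ u))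
    (fun u hu => by
      have h1 : Ψ (τ u) = F (τ u) := le_antisymm (hΨle _) (hu ▸ hFτ u)
      have h2 := hfix _ h1
      have h3 : F (τ u) ≤ c := by
        obtain ⟨_, v, hv, rfl⟩ := u
        exact ((hFτ v).trans (hΨle v)).trans hv
      rcases hcrit (τ u) h3 (fun ψ => by rw [← hτw, h2]) with h | h
      · left; exact Subtype.ext (congrArg (fun v : V => (v : H)) h)
      · right; exact Subtype.ext (congrArg (fun v : V => (v : H)) h))
  let ζ : ℝ → K := fun t => ⟨z t, hzK t⟩
  have hζ : Continuous ζ := hz.subtype_mk _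
  have hζlim : Tendsto ζ atTop (nhds b') := tendsto_subtype_rng.2 hzlim
  have hζ0 : ζ 0 = a' := Subtype.ext hz0
  obtain ⟨t, ht⟩ := (hζlim.eventually (hWb.mem_nhds hbW)).exists
  obtain ⟨x, -, hx⟩ := isPreconnected_univ (ζ ⁻¹' Wa) (ζ ⁻¹' Wb) (hWa.preimage hζ)
    (hWb.preimage hζ) (fun x _ => by
      have : ζ x ∈ Wa ∪ Wb := hun ▸ Set.mem_univ _
      exact this) ⟨0, trivial, by simpa [hζ0] using haW⟩ ⟨t, trivial, ht⟩
  exact Set.disjoint_left.1 hdisj hx.1 hx.2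

end Abstract

/-! ### Fractional Poincaré inequality -/

theorem gagSq_congr {N : ℕ} {s : ℝ} {u v : E N → ℝ} (h : u =ᵐ[volume] v) :
    gagSq N s u = gagSq N s v := by
  unfold gagSq
  refine lintegral_congr_ae ?_
  filter_upwards [h] with x hx
  refine lintegral_congr_ae ?_
  filter_upwards [h] with y hy
  rw [hx, hy]

theorem EF_congr {N : ℕ} {s q α : ℝ} {Ω : Set (E N)} {u v : E N → ℝ} (h : u =ᵐ[volume] v) :
    EF N s q α Ω u = EF N s q α Ω v := by
  unfold EF
  rw [gagSq_congr h]
  congr 2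
  refine integral_congr_ae ?_
  filter_upwards [ae_restrict_of_ae h] with x hx
  rw [hx]

theorem d0_congr {N : ℕ} {Ω : Set (E N)} {u v u' v' : E N → ℝ} (h : u =ᵐ[volume] u')
    (h' : v =ᵐ[volume] v') : d0 N Ω u v = d0 N Ω u' v' := by
  unfold d0
  refine integral_congr_ae ?_
  filter_upwards [ae_restrict_of_ae h, ae_restrict_of_ae h'] with x hx hx'
  rw [hx, hx']

theorem sq_le_mul_kernel {N : ℕ} {s : ℝ} (hs : 0 < s) (u : E N → ℝ) {d : ℝ} {x y : E N}
    (hd : dist x y ≤ d) :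
    ENNReal.ofReal ((u x - u y) ^ 2) ≤ ENNReal.ofReal (d ^ ((N : ℝ) + 2 * s)) *
      ENNReal.ofReal ((u x - u y) ^ 2 / dist x y ^ ((N : ℝ) + 2 * s)) := by
  have hp : 0 < (N : ℝ) + 2 * s := by positivity
  have hd0 : 0 ≤ d := dist_nonneg.trans hd
  rw [← ENNReal.ofReal_mul (Real.rpow_nonneg hd0 _)]
  refine ENNReal.ofReal_le_ofReal ?_
  rcases eq_or_ne x y with rfl | hxy
  · simp
  · have h0 : 0 < dist x y := dist_pos.2 hxy
    have h1 : 0 < dist x y ^ ((N : ℝ) + 2 * s) := Real.rpow_pos_of_pos h0 _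
    rw [mul_div_assoc', le_div_iff₀ h1, mul_comm]
    exact mul_le_mul_of_nonneg_right (Real.rpow_le_rpow h0.le hd hp.le) (sq_nonneg _)

/-- Fractional Poincaré inequality: a unit ball outside `Ω`, on which `u` vanishes, bounds the
seminorm of `u` from below by the `L²` norm. -/
theorem lintegral_sq_le_mul_gagSq {N : ℕ} (hN : 1 ≤ N) {Ω : Set (E N)} (hΩo : IsOpen Ω)
    (hΩb : Bornology.IsBounded Ω) {s : ℝ} (hs : 0 < s) :
    ∃ C : ℝ, 0 < C ∧ ∀ u : E N → ℝ, (∀ᵐ x : E N, x ∉ Ω → u x = 0) →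
      ∫⁻ x, ENNReal.ofReal (u x ^ 2) ≤ ENNReal.ofReal C * gagSq N s u := by
  obtain ⟨R, hR0, hR⟩ := hΩb.subset_ball_lt 0 (0 : E N)
  have : Nonempty (Fin N) := ⟨⟨0, hN⟩⟩
  obtain ⟨p, hp⟩ : ∃ p : E N, ‖p‖ = R + 1 := by
    exact ⟨EuclideanSpace.single ⟨0, hN⟩ (R + 1), by simp [abs_of_pos (show 0 < R + 1 by linarith)]⟩
  set S := Metric.ball p 1 with hS
  have hSΩ : ∀ y ∈ S, y ∉ Ω := by
    intro y hy hyΩ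
    have h1 := hR hyΩ
    rw [mem_ball_zero_iff] at h1
    rw [hS, mem_ball_iff_norm] at hy
    have := norm_sub_norm_le p y
    rw [norm_sub_rev] at hy
    linarith
  set d := 2 * R + 2 with hd
  have hdist : ∀ x ∈ Ω, ∀ y ∈ S, dist x y ≤ d := by
    intro x hx y hy
    have h1 := hR hx
    rw [mem_ball_zero_iff] at h1
    rw [hS, Metric.mem_ball] at hy
    have h2 := dist_triangle x p y
    rw [dist_comm p y] at h2
    have h3 : dist x p ≤ ‖x‖ + ‖p‖ := by rw [dist_eq_norm]; exact norm_sub_le _ _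
    linarith
  have hV0 : volume S ≠ 0 := (Metric.measure_ball_pos volume p one_pos).ne'
  have hVt : volume S ≠ ⊤ := measure_ball_lt_top.ne
  have hVp : 0 < (volume S).toReal := ENNReal.toReal_pos hV0 hVt
  have hdp : 0 < d ^ ((N : ℝ) + 2 * s) := Real.rpow_pos_of_pos (by positivity) _
  refine ⟨d ^ ((N : ℝ) + 2 * s) / (volume S).toReal, by positivity, fun u hu => ?_⟩
  have h1 : ∫⁻ x, ENNReal.ofReal (u x ^ 2) = ∫⁻ x in Ω, ENNReal.ofReal (u x ^ 2) := by
    rw [← lintegral_indicator hΩo.measurableSet]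
    refine lintegral_congr_ae ?_
    filter_upwards [hu] with x hx
    by_cases hxΩ : x ∈ Ω
    · simp [hxΩ]
    · simp [hxΩ, hx hxΩ]
  have h2 : volume S * ∫⁻ x in Ω, ENNReal.ofReal (u x ^ 2) ≤
      ENNReal.ofReal (d ^ ((N : ℝ) + 2 * s)) * gagSq N s u := by
    rw [← lintegral_const_mul' _ _ hVt]
    unfold gagSq
    rw [← lintegral_const_mul' _ _ ENNReal.ofReal_ne_top]
    refine (setLIntegral_mono' hΩo.measurableSet fun x hx => ?_).trans (setLIntegral_le_lintegral _ _)
    rw [← lintegral_const_mul' _ _ ENNReal.ofReal_ne_top]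
    refine le_trans ?_ (setLIntegral_le_lintegral S _)
    rw [mul_comm, ← setLIntegral_const]
    refine lintegral_mono_ae ?_
    filter_upwards [ae_restrict_of_ae hu, ae_restrict_mem measurableSet_ball] with y hy hyS
    have hy0 := hy (hSΩ y hyS)
    have := sq_le_mul_kernel hs u (hdist x hx y hyS)
    rwa [hy0, sub_zero] at this ⊢
  rw [h1, ENNReal.ofReal_div_of_pos hVp, ENNReal.ofReal_toReal hVt, ENNReal.mul_div_right_comm.symm,
    ENNReal.le_div_iff_mul_le (Or.inl hV0) (Or.inl hVt), mul_comm]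
  exact h2

/-! ### Averages over a grid of cubes -/

theorem integral_quadratic {X : Type*} [MeasurableSpace X] {μ : Measure X} [IsFiniteMeasure μ]
    {v : X → ℝ} (hi1 : Integrable v μ) (hi2 : Integrable (fun x => v x ^ 2) μ) (A B C : ℝ) :
    Integrable (fun x => A * v x ^ 2 + B * v x + C) μ ∧ ∫ x, (A * v x ^ 2 + B * v x + C) ∂μ =
      A * (∫ x, v x ^ 2 ∂μ) + B * (∫ x, v x ∂μ) + C * μ.real Set.univ := by
  have h1 : Integrable (fun x => A * v x ^ 2 + B * v x) μ :=
    (hi2.const_mul A).add (hi1.const_mul B)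
  refine ⟨h1.add (integrable_const C), ?_⟩
  rw [integral_add h1 (integrable_const C), integral_add (hi2.const_mul A) (hi1.const_mul B),
    integral_const_mul, integral_const_mul, integral_const, smul_eq_mul, mul_comm C]

theorem lintegral_lintegral_sq_sub {N : ℕ} {Q : Set (E N)} (hQt : volume Q ≠ ⊤)
    {v : E N → ℝ} (hv : MemLp v 2 volume) :
    ∫⁻ x in Q, ∫⁻ y in Q, ENNReal.ofReal ((v x - v y) ^ 2) =
      ENNReal.ofReal (2 * (volume Q).toReal * (∫ x in Q, v x ^ 2) - 2 * (∫ x in Q, v x) ^ 2) := by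
  have : IsFiniteMeasure (volume.restrict Q) := isFiniteMeasure_restrict.2 hQt
  have hv2 : MemLp v 2 (volume.restrict Q) := hv.restrict Q
  have hi2 : Integrable (fun x => v x ^ 2) (volume.restrict Q) := hv2.integrable_sq
  have hi1 : Integrable v (volume.restrict Q) := hv2.integrable (by norm_num)
  set μ := volume.restrict Q
  have hμ : μ.real Set.univ = (volume Q).toReal := by simp [μ, Measure.real]
  set a := (volume Q).toReal
  set S := ∫ x, v x ∂μ
  set W := ∫ x, v x ^ 2 ∂μ
  have hq : ∀ x, Integrable (fun y => (v x - v y) ^ 2) μ ∧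
      ∫ y, (v x - v y) ^ 2 ∂μ = a * v x ^ 2 + (-2 * S) * v x + W := by
    intro x
    have heq : (fun y => (v x - v y) ^ 2) =
        fun y => 1 * v y ^ 2 + (-2 * v x) * v y + v x ^ 2 := by
      ext y; ring
    rw [heq]
    refine ⟨(integral_quadratic hi1 hi2 _ _ _).1, ?_⟩
    rw [(integral_quadratic hi1 hi2 _ _ _).2, hμ]
    ring
  have hin : ∀ x, ∫⁻ y, ENNReal.ofReal ((v x - v y) ^ 2) ∂μ =
      ENNReal.ofReal (a * v x ^ 2 + (-2 * S) * v x + W) := by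
    intro x
    rw [← ofReal_integral_eq_lintegral_ofReal (hq x).1
      (Eventually.of_forall fun y => sq_nonneg _), (hq x).2]
  simp_rw [hin]
  obtain ⟨h1, h2⟩ := integral_quadratic hi1 hi2 a (-2 * S) W
  rw [← ofReal_integral_eq_lintegral_ofReal h1, h2, hμ]
  · congr 1
    ring
  · refine Eventually.of_forall fun x => ?_
    change 0 ≤ a * v x ^ 2 + (-2 * S) * v x + W
    rw [← (hq x).2]
    exact integral_nonneg fun y => sq_nonneg _

/-- On a small cube, the `L²` norm is controlled by the Gagliardo energy and by the mean value. -/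
theorem setIntegral_sq_le {N : ℕ} {s : ℝ} (hs : 0 < s) {Q : Set (E N)} (hQm : MeasurableSet Q)
    {b d : ℝ} (hb : 0 < b)
    (hQ : volume Q = ENNReal.ofReal b) (hd : ∀ x ∈ Q, ∀ y ∈ Q, dist x y ≤ d)
    {v : E N → ℝ} (hv : MemLp v 2 volume) :
    ENNReal.ofReal (∫ x in Q, v x ^ 2) ≤
      ENNReal.ofReal (d ^ ((N : ℝ) + 2 * s) / (2 * b)) *
        (∫⁻ x in Q, ∫⁻ y, ENNReal.ofReal ((v x - v y) ^ 2 / dist x y ^ ((N : ℝ) + 2 * s))) +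
      ENNReal.ofReal ((∫ x in Q, v x) ^ 2 / b) := by
  have hQt : volume Q ≠ ⊤ := by rw [hQ]; exact ENNReal.ofReal_ne_top
  have h1 := lintegral_lintegral_sq_sub hQt hv
  rw [hQ, ENNReal.toReal_ofReal hb.le] at h1
  have hW : ∫ x in Q, v x ^ 2 = (1 / (2 * b)) *
      (2 * b * (∫ x in Q, v x ^ 2) - 2 * (∫ x in Q, v x) ^ 2) + (∫ x in Q, v x) ^ 2 / b := by
    field_simp; ring
  have h2 : ∫⁻ x in Q, ∫⁻ y in Q, ENNReal.ofReal ((v x - v y) ^ 2) ≤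
      ENNReal.ofReal (d ^ ((N : ℝ) + 2 * s)) *
      (∫⁻ x in Q, ∫⁻ y, ENNReal.ofReal ((v x - v y) ^ 2 / dist x y ^ ((N : ℝ) + 2 * s))) := by
    rw [← lintegral_const_mul' _ _ ENNReal.ofReal_ne_top]
    refine setLIntegral_mono' hQm fun x hx => ?_
    rw [← lintegral_const_mul' _ _ ENNReal.ofReal_ne_top]
    refine (setLIntegral_mono' hQm fun y hy => ?_).trans (setLIntegral_le_lintegral Q _)
    exact sq_le_mul_kernel hs v (hd x hx y hy)
  have h3 : ENNReal.ofReal (d ^ ((N : ℝ) + 2 * s) / (2 * b)) =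
      ENNReal.ofReal (1 / (2 * b)) * ENNReal.ofReal (d ^ ((N : ℝ) + 2 * s)) := by
    rw [← ENNReal.ofReal_mul (by positivity)]; congr 1; ring
  rw [hW]
  refine ENNReal.ofReal_add_le.trans (add_le_add_left ?_ _)
  rw [ENNReal.ofReal_mul (by positivity), h3, ← h1, mul_assoc]
  gcongr

/-- The half-open cube of side `h` and index `k` in the grid `h ℤ^N`. -/
def gridCube (N : ℕ) (h : ℝ) (k : Fin N → ℤ) : Set (E N) := {x | ∀ i, ⌊x i / h⌋ = k i}

theorem gridCube_eq {N : ℕ} {h : ℝ} (hh : 0 < h) (k : Fin N → ℤ) :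
    gridCube N h k = (WithLp.ofLp (p := 2)) ⁻¹'
      (Set.univ.pi fun i => Set.Ico ((k i : ℝ) * h) (((k i : ℝ) + 1) * h)) := by
  ext x
  simp only [gridCube, Set.mem_ofPred_eq, Set.mem_preimage, Set.mem_pi, Set.mem_univ, true_imp_iff,
    Set.mem_Ico]
  refine forall_congr' fun i => ?_
  rw [Int.floor_eq_iff, le_div_iff₀ hh, div_lt_iff₀ hh]

theorem measurableSet_gridCube {N : ℕ} {h : ℝ} (hh : 0 < h) (k : Fin N → ℤ) :
    MeasurableSet (gridCube N h k) := by
  rw [gridCube_eq hh]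
  exact (PiLp.volume_preserving_ofLp (Fin N)).measurable
    (MeasurableSet.univ_pi fun i => measurableSet_Ico)

theorem volume_gridCube {N : ℕ} {h : ℝ} (hh : 0 < h) (k : Fin N → ℤ) :
    volume (gridCube N h k) = ENNReal.ofReal (h ^ N) := by
  rw [gridCube_eq hh, (PiLp.volume_preserving_ofLp (Fin N)).measure_preimage
    (MeasurableSet.univ_pi fun i => measurableSet_Ico).nullMeasurableSet, Real.volume_pi_Ico]
  have : ∀ i : Fin N, ((k i : ℝ) + 1) * h - (k i : ℝ) * h = h := fun i => by ring
  simp [this, ENNReal.ofReal_pow hh.le]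

theorem dist_le_of_mem_gridCube {N : ℕ} {h : ℝ} (hh : 0 < h) {k : Fin N → ℤ} {x y : E N}
    (hx : x ∈ gridCube N h k) (hy : y ∈ gridCube N h k) : dist x y ≤ √N * h := by
  rw [gridCube_eq hh] at hx hy
  rw [EuclideanSpace.dist_eq]
  have : ∑ i, dist (x i) (y i) ^ 2 ≤ N * h ^ 2 := by
    calc ∑ i, dist (x i) (y i) ^ 2 ≤ ∑ _i : Fin N, h ^ 2 := by
          refine Finset.sum_le_sum fun i _ => ?_
          have h1 := hx i trivial
          have h2 := hy i trivial
          rw [Set.mem_Ico] at h1 h2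
          have : dist (x i) (y i) ≤ h := by
            rw [Real.dist_eq, abs_le]; constructor <;> linarith [h1.1, h1.2, h2.1, h2.2]
          exact pow_le_pow_left₀ dist_nonneg this 2
      _ = N * h ^ 2 := by simp
  calc √(∑ i, dist (x i) (y i) ^ 2) ≤ √(N * h ^ 2) := Real.sqrt_le_sqrt this
    _ = √N * h := by rw [Real.sqrt_mul (by positivity), Real.sqrt_sq hh.le]

theorem exists_finset_gridCube_cover {N : ℕ} {Ω : Set (E N)} (hΩb : Bornology.IsBounded Ω)
    {h : ℝ} (hh : 0 < h) :
    ∃ I : Finset (Fin N → ℤ), Ω ⊆ ⋃ k ∈ I, gridCube N h k := by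
  obtain ⟨R, hR⟩ := hΩb.exists_norm_le
  refine ⟨Fintype.piFinset fun _ => Finset.Icc ⌊-R / h⌋ ⌊R / h⌋, fun x hx => ?_⟩
  simp only [Set.mem_iUnion]
  refine ⟨fun i => ⌊x i / h⌋, ?_, fun i => rfl⟩
  rw [Fintype.mem_piFinset]
  intro i
  have h1 : |x i| ≤ R := (PiLp.norm_apply_le x i).trans (hR x hx)
  rw [abs_le] at h1
  rw [Finset.mem_Icc]
  exact ⟨Int.floor_le_floor (div_le_div_of_nonneg_right h1.1 hh.le),
    Int.floor_le_floor (div_le_div_of_nonneg_right h1.2 hh.le)⟩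

/-- For every `ε`, the `L²` norm is controlled by `ε` times the Gagliardo energy and by finitely many
averages over the cubes of a fine grid. -/
theorem sq_integral_le_gagSq_add_averages {N : ℕ} (hN : 1 ≤ N) {Ω : Set (E N)}
    (hΩb : Bornology.IsBounded Ω) {s : ℝ} (hs : 0 < s) {ε : ℝ} (hε : 0 < ε) :
    ∃ (I : Finset (Fin N → ℤ)) (Q : (Fin N → ℤ) → Set (E N)) (b : ℝ), 0 < b ∧
      (∀ k, MeasurableSet (Q k) ∧ volume (Q k) ≠ ⊤) ∧
      ∀ v : E N → ℝ, MemLp v 2 volume → (∀ᵐ x : E N, x ∉ Ω → v x = 0) →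
        ENNReal.ofReal (∫ x, v x ^ 2) ≤ ENNReal.ofReal ε * gagSq N s v +
          ∑ k ∈ I, ENNReal.ofReal ((∫ x in Q k, v x) ^ 2 / b) := by
  have hN0 : (0 : ℝ) < N := by exact_mod_cast hN
  set p := (N : ℝ) + 2 * s with hp
  -- The side `h` is chosen so that `(√N h)^(N + 2s) / (2 h^N) = ε`.
  set A := √N ^ p / 2 with hA
  have hApos : 0 < A := by have := Real.sqrt_pos.2 hN0; positivity
  set h := (ε / A) ^ (1 / (2 * s)) with hh'
  have hh : 0 < h := by positivity
  have hcst : (√N * h) ^ p / (2 * h ^ N) = ε := by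
    have h1 : h ^ (2 * s) = ε / A := by
      rw [hh', ← Real.rpow_mul (by positivity), one_div, inv_mul_cancel₀ (by positivity),
        Real.rpow_one]
    rw [Real.mul_rpow (Real.sqrt_nonneg _) hh.le, hp, Real.rpow_add hh, Real.rpow_natCast, h1, ← hp]
    rw [hA]
    have := Real.sqrt_pos.2 hN0
    field_simp
  obtain ⟨I, hI⟩ := exists_finset_gridCube_cover hΩb hh
  refine ⟨I, gridCube N h, h ^ N, by positivity, fun k => ⟨measurableSet_gridCube hh k, by
    rw [volume_gridCube hh]; exact ENNReal.ofReal_ne_top⟩, fun v hv hv0 => ?_⟩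
  have hdisj : (I : Set (Fin N → ℤ)).PairwiseDisjoint (gridCube N h) := by
    intro k _ l _ hkl
    rw [Function.onFun, Set.disjoint_left]
    intro x hx hy
    exact hkl (funext fun i => (hx i).symm.trans (hy i))
  have hU : MeasurableSet (⋃ k ∈ I, gridCube N h k) :=
    I.measurableSet_biUnion fun k _ => measurableSet_gridCube hh k
  have h1 : ∫ x, v x ^ 2 = ∑ k ∈ I, ∫ x in gridCube N h k, v x ^ 2 := by
    rw [← integral_biUnion_finset I (fun k _ => measurableSet_gridCube hh k) hdisj
      (fun k _ => hv.integrable_sq.integrableOn), setIntegral_eq_integral_of_ae_compl_eq_zero]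
    filter_upwards [hv0] with x hx hxU
    rw [hx fun hxΩ => hxU (hI hxΩ)]
    simp
  rw [h1, ENNReal.ofReal_sum_of_nonneg fun k _ => integral_nonneg fun x => sq_nonneg _]
  have h2 : ∑ k ∈ I, (∫⁻ x in gridCube N h k, ∫⁻ y,
      ENNReal.ofReal ((v x - v y) ^ 2 / dist x y ^ p)) ≤ gagSq N s v := by
    rw [← lintegral_biUnion_finset hdisj (fun k _ => measurableSet_gridCube hh k)]
    exact setLIntegral_le_lintegral _ _
  calc ∑ k ∈ I, ENNReal.ofReal (∫ x in gridCube N h k, v x ^ 2)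
      ≤ ∑ k ∈ I, (ENNReal.ofReal ε * (∫⁻ x in gridCube N h k, ∫⁻ y,
          ENNReal.ofReal ((v x - v y) ^ 2 / dist x y ^ p)) +
          ENNReal.ofReal ((∫ x in gridCube N h k, v x) ^ 2 / h ^ N)) := by
        refine Finset.sum_le_sum fun k _ => ?_
        have := setIntegral_sq_le hs (measurableSet_gridCube hh k) (by positivity)
          (volume_gridCube hh k) (fun x hx y hy => dist_le_of_mem_gridCube hh hx hy) hv
        rwa [← hp, hcst] at this
    _ = ENNReal.ofReal ε * ∑ k ∈ I, (∫⁻ x in gridCube N h k, ∫⁻ y,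
          ENNReal.ofReal ((v x - v y) ^ 2 / dist x y ^ p)) +
          ∑ k ∈ I, ENNReal.ofReal ((∫ x in gridCube N h k, v x) ^ 2 / h ^ N) := by
        rw [Finset.sum_add_distrib, Finset.mul_sum]
    _ ≤ _ := by gcongr

/-! ### The energy space and the fractional Rellich theorem -/

/-- The Hilbert space `L²(ℝ^N)`. -/
abbrev L2E (N : ℕ) : Type := Lp ℝ 2 (volume : Measure (E N))

/-- The weighted difference `(u(x) - u(y)) |x - y|^{-(N+2s)/2}`, whose `L²(ℝ^N × ℝ^N)` norm is the
Gagliardo seminorm of `u`. -/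
def gagDiff (N : ℕ) (s : ℝ) (u : E N → ℝ) (p : E N × E N) : ℝ :=
  (u p.1 - u p.2) * √(1 / dist p.1 p.2 ^ ((N : ℝ) + 2 * s))

theorem gagDiff_mul {N : ℕ} {s : ℝ} (u v : E N → ℝ) (p : E N × E N) :
    gagDiff N s u p * gagDiff N s v p =
      (u p.1 - u p.2) * (v p.1 - v p.2) / dist p.1 p.2 ^ ((N : ℝ) + 2 * s) := by
  have h : 0 ≤ 1 / dist p.1 p.2 ^ ((N : ℝ) + 2 * s) := by positivity
  unfold gagDiff
  rw [mul_mul_mul_comm, Real.mul_self_sqrt h, mul_one_div]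

theorem measurable_gagDiff {N : ℕ} {s : ℝ} {u : E N → ℝ} (hu : Measurable u) :
    Measurable (gagDiff N s u) := by
  unfold gagDiff
  fun_prop

theorem gagDiff_congr {N : ℕ} {s : ℝ} {u v : E N → ℝ} (h : u =ᵐ[volume] v) :
    gagDiff N s u =ᵐ[(volume : Measure (E N)).prod volume] gagDiff N s v := by
  have h1 := Measure.quasiMeasurePreserving_fst (μ := (volume : Measure (E N)))
    (ν := (volume : Measure (E N))) |>.ae h
  have h2 := Measure.quasiMeasurePreserving_snd (μ := (volume : Measure (E N)))
    (ν := (volume : Measure (E N))) |>.ae h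
  filter_upwards [h1, h2] with p hp1 hp2
  simp only [gagDiff, hp1, hp2]

theorem gagSq_eq_lintegral_prod {N : ℕ} {s : ℝ} {u : E N → ℝ} (hu : Measurable u) :
    gagSq N s u =
      ∫⁻ p, ENNReal.ofReal (gagDiff N s u p ^ 2) ∂((volume : Measure (E N)).prod volume) := by
  rw [lintegral_prod _ ((measurable_gagDiff hu).pow_const 2).ennreal_ofReal.aemeasurable]
  unfold gagSq
  simp_rw [sq, gagDiff_mul]

theorem memLp_gagDiff_iff {N : ℕ} {s : ℝ} {u : E N → ℝ} (hu : Measurable u) :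
    MemLp (gagDiff N s u) 2 ((volume : Measure (E N)).prod volume) ↔ gagSq N s u < ⊤ := by
  rw [memLp_two_iff_integrable_sq (measurable_gagDiff hu).aestronglyMeasurable,
    ← lintegral_ofReal_ne_top_iff_integrable
      ((measurable_gagDiff hu).pow_const 2).aestronglyMeasurable
      (Eventually.of_forall fun p => sq_nonneg _), gagSq_eq_lintegral_prod hu, lt_top_iff_ne_top]

theorem measurable_coeFn {N : ℕ} (u : L2E N) : Measurable (u : E N → ℝ) :=
  (Lp.stronglyMeasurable u).measurable

/-- The subspace of `L²(ℝ^N)` formed by the classes that vanish a.e. outside `Ω` and have finite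
Gagliardo seminorm. -/
def energySpace (N : ℕ) (s : ℝ) (Ω : Set (E N)) : Submodule ℝ (L2E N) where
  carrier := {u | (∀ᵐ x : E N, x ∉ Ω → u x = 0) ∧ gagSq N s u < ⊤}
  zero_mem' := by
    have h0 := Lp.coeFn_zero ℝ 2 (volume : Measure (E N))
    refine ⟨?_, ?_⟩
    · filter_upwards [h0] with x hx _
      rw [hx]; rfl
    · rw [gagSq_congr h0]; simp [gagSq]
  add_mem' := by
    rintro u v ⟨hu1, hu2⟩ ⟨hv1, hv2⟩
    have h0 := Lp.coeFn_add u v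
    refine ⟨?_, ?_⟩
    · filter_upwards [h0, hu1, hv1] with x hx hu hv hxΩ
      rw [hx, Pi.add_apply, hu hxΩ, hv hxΩ, add_zero]
    · rw [gagSq_congr h0, ← memLp_gagDiff_iff ((measurable_coeFn u).add (measurable_coeFn v))]
      have : gagDiff N s (u + v) = gagDiff N s u + gagDiff N s v := by
        ext p; simp only [gagDiff, Pi.add_apply]; ring
      rw [this]
      exact ((memLp_gagDiff_iff (measurable_coeFn u)).2 hu2).add
        ((memLp_gagDiff_iff (measurable_coeFn v)).2 hv2)
  smul_mem' := by
    rintro c u ⟨hu1, hu2⟩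
    have h0 := Lp.coeFn_smul c u
    refine ⟨?_, ?_⟩
    · filter_upwards [h0, hu1] with x hx hu hxΩ
      rw [hx, Pi.smul_apply, hu hxΩ, smul_zero]
    · rw [gagSq_congr h0, ← memLp_gagDiff_iff ((measurable_coeFn u).const_smul c)]
      have : gagDiff N s (c • u) = c • gagDiff N s u := by
        ext p; simp only [gagDiff, Pi.smul_apply, smul_eq_mul]; ring
      rw [this]
      exact ((memLp_gagDiff_iff (measurable_coeFn u)).2 hu2).const_smul c

theorem memLp_gagDiff {N : ℕ} {s : ℝ} {Ω : Set (E N)} (u : energySpace N s Ω) :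
    MemLp (gagDiff N s (u : L2E N)) 2 ((volume : Measure (E N)).prod volume) :=
  (memLp_gagDiff_iff (measurable_coeFn _)).2 u.2.2

/-- The linear map `u ↦ gagDiff u` from the energy space to `L²(ℝ^N × ℝ^N)`. -/
def gagDiffL (N : ℕ) (s : ℝ) (Ω : Set (E N)) :
    energySpace N s Ω →ₗ[ℝ] Lp ℝ 2 ((volume : Measure (E N)).prod (volume : Measure (E N))) where
  toFun u := (memLp_gagDiff u).toLp _
  map_add' u v := by
    have h : gagDiff N s ((u + v : energySpace N s Ω) : L2E N)
        =ᵐ[(volume : Measure (E N)).prod volume]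
        gagDiff N s (u : L2E N) + gagDiff N s (v : L2E N) := by
      refine (gagDiff_congr (Lp.coeFn_add (u : L2E N) (v : L2E N))).trans ?_
      refine Eventually.of_forall fun p => ?_
      simp only [gagDiff, Pi.add_apply]; ring
    rw [← MemLp.toLp_add (memLp_gagDiff u) (memLp_gagDiff v)]
    exact MemLp.toLp_congr _ _ h
  map_smul' c u := by
    have h : gagDiff N s ((c • u : energySpace N s Ω) : L2E N)
        =ᵐ[(volume : Measure (E N)).prod volume] c • gagDiff N s (u : L2E N) := by
      refine (gagDiff_congr (Lp.coeFn_smul c (u : L2E N))).trans ?_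
      refine Eventually.of_forall fun p => ?_
      simp only [gagDiff, Pi.smul_apply, smul_eq_mul]; ring
    rw [RingHom.id_apply, ← MemLp.toLp_const_smul c (memLp_gagDiff u)]
    exact MemLp.toLp_congr _ _ h

/-- The Gagliardo bilinear form on the energy space. -/
def gagForm (N : ℕ) (s : ℝ) (Ω : Set (E N)) : LinearMap.BilinForm ℝ (energySpace N s Ω) :=
  (innerₗ (Lp ℝ 2 ((volume : Measure (E N)).prod (volume : Measure (E N))))).compl₁₂
    (gagDiffL N s Ω) (gagDiffL N s Ω)

theorem gagForm_apply {N : ℕ} {s : ℝ} {Ω : Set (E N)} (u v : energySpace N s Ω) :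
    gagForm N s Ω u v = inner ℝ (gagDiffL N s Ω u) (gagDiffL N s Ω v) := rfl

theorem gagForm_symm {N : ℕ} {s : ℝ} {Ω : Set (E N)} (u v : energySpace N s Ω) :
    gagForm N s Ω u v = gagForm N s Ω v u := by
  rw [gagForm_apply, gagForm_apply, real_inner_comm]

theorem gagForm_eq_integral {N : ℕ} {s : ℝ} {Ω : Set (E N)} (u v : energySpace N s Ω) :
    gagForm N s Ω u v = ∫ x : E N, ∫ y : E N,
      ((u : L2E N) x - (u : L2E N) y) * ((v : L2E N) x - (v : L2E N) y) /
        dist x y ^ ((N : ℝ) + 2 * s) := by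
  have hi : Integrable (fun p => gagDiff N s (u : L2E N) p * gagDiff N s (v : L2E N) p)
      ((volume : Measure (E N)).prod volume) := (memLp_gagDiff u).integrable_mul (memLp_gagDiff v)
  rw [gagForm_apply, L2.inner_def]
  have h1 : ∫ p, inner ℝ ((gagDiffL N s Ω u) p) ((gagDiffL N s Ω v) p)
      ∂((volume : Measure (E N)).prod volume) =
      ∫ p, gagDiff N s (u : L2E N) p * gagDiff N s (v : L2E N) p
        ∂((volume : Measure (E N)).prod volume) := by
    refine integral_congr_ae ?_
    filter_upwards [(memLp_gagDiff u).coeFn_toLp, (memLp_gagDiff v).coeFn_toLp] with p h1 h2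
    change inner ℝ (((memLp_gagDiff u).toLp _) p) (((memLp_gagDiff v).toLp _) p) = _
    rw [h1, h2, real_inner_eq_re_inner, RCLike.inner_apply]
    simp [mul_comm]
  rw [h1, integral_prod _ hi]
  simp_rw [gagDiff_mul]

theorem gagForm_self {N : ℕ} {s : ℝ} {Ω : Set (E N)} (u : energySpace N s Ω) :
    gagForm N s Ω u u = (gagSq N s (u : L2E N)).toReal := by
  have h0 : MemLp (gagDiff N s (u : L2E N)) 2 _ := memLp_gagDiff u
  rw [gagForm_apply, L2.inner_def, gagSq_eq_lintegral_prod (measurable_coeFn _),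
    ← ofReal_integral_eq_lintegral_ofReal h0.integrable_sq
      (Eventually.of_forall fun p => sq_nonneg _),
    ENNReal.toReal_ofReal (integral_nonneg fun p => sq_nonneg _)]
  refine integral_congr_ae ?_
  filter_upwards [h0.coeFn_toLp] with p h1
  change inner ℝ ((h0.toLp _) p) ((h0.toLp _) p) = _
  rw [h1, real_inner_self_eq_norm_sq, Real.norm_eq_abs, sq_abs]

theorem norm_sq_eq_integral {N : ℕ} (u : L2E N) : ‖u‖ ^ 2 = ∫ x, u x ^ 2 := by
  rw [← real_inner_self_eq_norm_sq, L2.inner_def]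
  refine integral_congr_ae (Eventually.of_forall fun x => ?_)
  simp [sq]

theorem poincare_energySpace {N : ℕ} (hN : 1 ≤ N) {Ω : Set (E N)} (hΩo : IsOpen Ω)
    (hΩb : Bornology.IsBounded Ω) {s : ℝ} (hs : 0 < s) :
    ∃ C : ℝ, 0 < C ∧ ∀ u : energySpace N s Ω, ‖(u : L2E N)‖ ^ 2 ≤ C * gagForm N s Ω u u := by
  obtain ⟨C, hC, h⟩ := lintegral_sq_le_mul_gagSq hN hΩo hΩb hs
  refine ⟨C, hC, fun u => ?_⟩
  have h1 := h (u : L2E N) u.2.1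
  rw [← ofReal_integral_eq_lintegral_ofReal (Lp.memLp (u : L2E N)).integrable_sq
    (Eventually.of_forall fun x => sq_nonneg _), ← norm_sq_eq_integral,
    ← ENNReal.ofReal_toReal u.2.2.ne, ← gagForm_self, ← ENNReal.ofReal_mul hC.le] at h1
  have h2 : 0 ≤ gagForm N s Ω u u := by rw [gagForm_self]; exact ENNReal.toReal_nonneg
  exact (ENNReal.ofReal_le_ofReal_iff (by positivity)).1 h1

/-- Lower semicontinuity of the Gagliardo seminorm in `L²`, by Fatou along an a.e. convergent
subsequence. -/
theorem isClosed_gagSq_le {N : ℕ} {s : ℝ} (Ω : Set (E N)) (M : ℝ≥0∞) :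
    IsClosed {u : L2E N | (∀ᵐ x : E N, x ∉ Ω → u x = 0) ∧ gagSq N s u ≤ M} := by
  refine IsSeqClosed.isClosed fun x u hx hxu => ?_
  obtain ⟨φ, hφ, hae⟩ := (tendstoInMeasure_of_tendsto_Lp hxu).exists_seq_tendsto_ae
  refine ⟨?_, ?_⟩
  · have h0 : ∀ᵐ y : E N, ∀ n, y ∉ Ω → x n y = 0 := ae_all_iff.2 fun n => (hx n).1
    filter_upwards [hae, h0] with y hy h0 hyΩ
    refine tendsto_nhds_unique hy ?_
    simp only [h0 _ hyΩ]
    exact tendsto_const_nhds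
  · have h1 := Measure.quasiMeasurePreserving_fst (μ := (volume : Measure (E N)))
      (ν := (volume : Measure (E N))) |>.ae hae
    have h2 := Measure.quasiMeasurePreserving_snd (μ := (volume : Measure (E N)))
      (ν := (volume : Measure (E N))) |>.ae hae
    rw [gagSq_eq_lintegral_prod (measurable_coeFn u)]
    calc ∫⁻ p, ENNReal.ofReal (gagDiff N s u p ^ 2) ∂((volume : Measure (E N)).prod volume)
        = ∫⁻ p, liminf (fun n => ENNReal.ofReal (gagDiff N s (x (φ n)) p ^ 2)) atTop
            ∂((volume : Measure (E N)).prod volume) := by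
          refine lintegral_congr_ae ?_
          filter_upwards [h1, h2] with p hp1 hp2
          refine (Tendsto.liminf_eq ?_).symm
          exact ENNReal.tendsto_ofReal (((hp1.sub hp2).mul_const _).pow 2)
      _ ≤ liminf (fun n => ∫⁻ p, ENNReal.ofReal (gagDiff N s (x (φ n)) p ^ 2)
            ∂((volume : Measure (E N)).prod volume)) atTop :=
          lintegral_liminf_le fun n =>
            ((measurable_gagDiff (measurable_coeFn _)).pow_const 2).ennreal_ofReal
      _ ≤ M := by
          refine liminf_le_of_le (by isBoundedDefault) fun b hb => ?_
          obtain ⟨n, hn⟩ := hb.exists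
          rw [← gagSq_eq_lintegral_prod (measurable_coeFn _)] at hn
          exact hn.trans (hx _).2

theorem image_gagForm_le {N : ℕ} {s : ℝ} {Ω : Set (E N)} {M : ℝ} (hM : 0 ≤ M) :
    (fun v : energySpace N s Ω => (v : L2E N)) '' {v | gagForm N s Ω v v ≤ M} =
      {u : L2E N | (∀ᵐ x : E N, x ∉ Ω → u x = 0) ∧ gagSq N s u ≤ ENNReal.ofReal M} := by
  ext u
  constructor
  · rintro ⟨v, hv, rfl⟩
    refine ⟨v.2.1, ?_⟩
    rw [← ENNReal.ofReal_toReal v.2.2.ne, ← gagForm_self]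
    exact ENNReal.ofReal_le_ofReal hv
  · rintro ⟨h1, h2⟩
    have h3 : gagSq N s u < ⊤ := h2.trans_lt ENNReal.ofReal_lt_top
    refine ⟨⟨u, h1, h3⟩, ?_, rfl⟩
    change gagForm N s Ω _ _ ≤ M
    rw [gagForm_self]
    exact ENNReal.toReal_le_of_le_ofReal hM h2

theorem totallyBounded_gagForm_le {N : ℕ} (hN : 1 ≤ N) {Ω : Set (E N)} (hΩo : IsOpen Ω)
    (hΩb : Bornology.IsBounded Ω) {s : ℝ} (hs : 0 < s) {M : ℝ} (hM : 0 ≤ M) :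
    TotallyBounded ((fun v : energySpace N s Ω => (v : L2E N)) '' {v | gagForm N s Ω v v ≤ M}) := by
  obtain ⟨C, hC, hP⟩ := poincare_energySpace hN hΩo hΩb hs
  rw [Metric.totallyBounded_iff]
  intro ε hε
  -- The difference of two elements of energy at most `M` has energy at most `4 M`, so the energy
  -- term of this inequality contributes at most `ε² / 2`.
  obtain ⟨I, Q, b, hb, hQ, hineq⟩ := sq_integral_le_gagSq_add_averages hN hΩb hs
    (show 0 < ε ^ 2 / (8 * M + 8) by positivity)
  let χ : (Fin N → ℤ) → L2E N := fun k => indicatorConstLp 2 (hQ k).1 (hQ k).2 1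
  let L : L2E N →L[ℝ] (I → ℝ) := ContinuousLinearMap.pi fun k => innerSL ℝ (χ k)
  have hL : ∀ u k, L u k = ∫ x in Q k, u x := fun u k => L2.inner_indicatorConstLp_one _ _ u
  set K := (fun v : energySpace N s Ω => (v : L2E N)) '' {v | gagForm N s Ω v v ≤ M} with hK
  have hKb : Bornology.IsBounded K := by
    rw [isBounded_iff_forall_norm_le]
    refine ⟨√(C * M), ?_⟩
    rintro _ ⟨v, hv, rfl⟩
    refine Real.le_sqrt_of_sq_le ((hP v).trans ?_)
    exact mul_le_mul_of_nonneg_left hv hC.le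
  have hLb : TotallyBounded (L '' K) :=
    ((L.lipschitz.isBounded_image hKb).isCompact_closure.totallyBounded).subset subset_closure
  set η := √(ε ^ 2 * b / (4 * (I.card + 1))) with hη
  have hη0 : 0 < η := Real.sqrt_pos.2 (by positivity)
  have hη2 : η ^ 2 = ε ^ 2 * b / (4 * (I.card + 1)) := Real.sq_sqrt (by positivity)
  obtain ⟨t', ht'K, ht'f, ht'⟩ := Set.exists_subset_image_finite_and.1
    (Metric.finite_approx_of_totallyBounded hLb η hη0)
  refine ⟨t', ht'f, fun u hu => ?_⟩
  obtain ⟨y, hy, huy⟩ := Set.mem_iUnion₂.1 (ht' (Set.mem_image_of_mem L hu))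
  obtain ⟨u', hu't, rfl⟩ := hy
  refine Set.mem_iUnion₂.2 ⟨u', hu't, ?_⟩
  obtain ⟨v', hv', rfl⟩ := ht'K hu't
  obtain ⟨v, hv, rfl⟩ := hu
  simp only [Set.mem_ofPred_eq] at hv hv'
  have hnn : ∀ w : energySpace N s Ω, 0 ≤ gagForm N s Ω w w := fun w => by
    rw [gagForm_self]; exact ENNReal.toReal_nonneg
  have hw : gagForm N s Ω (v - v') (v - v') ≤ 4 * M := by
    have h1 := hnn (v + v')
    simp only [map_add, map_sub, LinearMap.add_apply, LinearMap.sub_apply] at h1 ⊢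
    linarith
  have h1 := hineq ((v - v' : energySpace N s Ω) : L2E N) (Lp.memLp _) (v - v').2.1
  rw [← norm_sq_eq_integral, ← ENNReal.ofReal_toReal (v - v').2.2.ne, ← gagForm_self,
    ← ENNReal.ofReal_mul (by positivity),
    ← ENNReal.ofReal_sum_of_nonneg fun k _ => by positivity,
    ← ENNReal.ofReal_add (mul_nonneg (by positivity) (hnn _))
      (Finset.sum_nonneg fun k _ => by positivity)] at h1
  have h2 := (ENNReal.ofReal_le_ofReal_iff (add_nonneg (mul_nonneg (by positivity) (hnn _))
      (Finset.sum_nonneg fun k _ => by positivity))).1 h1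
  have h3 : ∑ k ∈ I, (∫ x in Q k, ((v - v' : energySpace N s Ω) : L2E N) x) ^ 2 / b ≤
      ε ^ 2 / 4 := by
    calc ∑ k ∈ I, (∫ x in Q k, ((v - v' : energySpace N s Ω) : L2E N) x) ^ 2 / b
        ≤ ∑ _k ∈ I, η ^ 2 / b := by
          refine Finset.sum_le_sum fun k hk => ?_
          have h4 : |L ((v - v' : energySpace N s Ω) : L2E N) ⟨k, hk⟩| ≤ η := by
            have h5 : L ((v - v' : energySpace N s Ω) : L2E N) ⟨k, hk⟩ =
                L (v : L2E N) ⟨k, hk⟩ - L (v' : L2E N) ⟨k, hk⟩ := by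
              rw [Submodule.coe_sub, map_sub]; rfl
            rw [h5, ← Real.dist_eq]
            exact (dist_le_pi_dist (L (v : L2E N)) (L (v' : L2E N)) ⟨k, hk⟩).trans
              (Metric.mem_ball.1 huy).le
          rw [hL] at h4
          have := sq_le_sq' (by linarith [(abs_le.1 h4).1]) (abs_le.1 h4).2
          gcongr
      _ = I.card * (η ^ 2 / b) := by rw [Finset.sum_const, nsmul_eq_mul]
      _ = (ε ^ 2 / 4) * (I.card / (I.card + 1)) := by rw [hη2]; field_simp
      _ ≤ ε ^ 2 / 4 := by
          refine mul_le_of_le_one_right (by positivity) ?_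
          rw [div_le_one (by positivity)]; linarith
  have h4 : ε ^ 2 / (8 * M + 8) * gagForm N s Ω (v - v') (v - v') ≤ ε ^ 2 / 2 := by
    refine (mul_le_mul_of_nonneg_left hw (by positivity)).trans ?_
    rw [div_mul_eq_mul_div, div_le_div_iff₀ (by positivity) (by positivity)]
    nlinarith [sq_nonneg ε]
  have h5 : ‖(v : L2E N) - v'‖ ^ 2 < ε ^ 2 := by
    have : 0 < ε ^ 2 := by positivity
    rw [← Submodule.coe_sub]
    linarith
  rw [Metric.mem_ball, dist_eq_norm]
  exact lt_of_pow_lt_pow_left₀ 2 hε.le h5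

/-- Fractional Rellich theorem: energy balls are compact in `L²`. -/
theorem isCompact_gagForm_le {N : ℕ} (hN : 1 ≤ N) {Ω : Set (E N)} (hΩo : IsOpen Ω)
    (hΩb : Bornology.IsBounded Ω) {s : ℝ} (hs : 0 < s) (M : ℝ) :
    IsCompact ((fun v : energySpace N s Ω => (v : L2E N)) '' {v | gagForm N s Ω v v ≤ M}) := by
  rcases le_or_gt 0 M with hM | hM
  · refine (totallyBounded_gagForm_le hN hΩo hΩb hs hM).isCompact_of_isClosed ?_
    rw [image_gagForm_le hM]
    exact isClosed_gagSq_le Ω _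
  · convert isCompact_empty
    rw [Set.image_eq_empty, Set.eq_empty_iff_forall_notMem]
    intro v hv
    have h0 : 0 ≤ gagForm N s Ω v v := by rw [gagForm_self]; exact ENNReal.toReal_nonneg
    exact absurd hv (not_le.2 (hM.trans_le h0))

/-! ### The Nemytskii operator of the power nonlinearity -/

theorem abs_rpow_sub_two_mul {q : ℝ} (hq : 1 < q) (t : ℝ) :
    |(|t| ^ (q - 2) * t)| = |t| ^ (q - 1) := by
  rcases eq_or_ne t 0 with rfl | ht
  · simp [Real.zero_rpow (by linarith : q - 1 ≠ 0)]
  · have h := abs_pos.2 ht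
    rw [abs_mul, abs_of_nonneg (by positivity : 0 ≤ |t| ^ (q - 2)), ← Real.rpow_add_one h.ne']
    ring_nf

theorem rpow_sub_two_mul_mul_self {q : ℝ} (hq : 1 < q) (t : ℝ) :
    |t| ^ (q - 2) * t * t = |t| ^ q := by
  rcases eq_or_ne t 0 with rfl | ht
  · simp [Real.zero_rpow (by linarith : q ≠ 0)]
  · have h := abs_pos.2 ht
    rw [mul_assoc, ← abs_mul_abs_self, ← mul_assoc, ← Real.rpow_add_one h.ne',
      ← Real.rpow_add_one h.ne']
    ring_nf

theorem rpow_sub_two_mul_of_nonneg {q : ℝ} (hq : 1 < q) {t : ℝ} (ht : 0 ≤ t) :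
    |t| ^ (q - 2) * t = t ^ (q - 1) := by
  have h := abs_rpow_sub_two_mul hq t
  rw [abs_of_nonneg (by positivity)] at h
  rw [h, abs_of_nonneg ht]

/-- The odd power `t ↦ |t|^{q-2} t` is Hölder continuous with exponent `q - 1`. -/
theorem abs_rpow_sub_two_mul_sub_le {q : ℝ} (hq : q ∈ Set.Ioo (1:ℝ) 2) (a b : ℝ) :
    |(|a| ^ (q - 2) * a) - |b| ^ (q - 2) * b| ≤ 2 * |a - b| ^ (q - 1) := by
  obtain ⟨hq1, hq2⟩ := hq
  have hp0 : 0 ≤ q - 1 := by linarith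
  have hp1 : q - 1 ≤ 1 := by linarith
  -- Two numbers of the same sign: subadditivity of `t ↦ t^{q-1}`.
  have key : ∀ a b : ℝ, 0 ≤ b → b ≤ a →
      |(|a| ^ (q - 2) * a) - |b| ^ (q - 2) * b| ≤ 2 * |a - b| ^ (q - 1) := by
    intro a b hb hab
    rw [rpow_sub_two_mul_of_nonneg hq1 hb, rpow_sub_two_mul_of_nonneg hq1 (hb.trans hab),
      abs_of_nonneg (sub_nonneg.2 (Real.rpow_le_rpow hb hab hp0)),
      abs_of_nonneg (sub_nonneg.2 hab)]
    have h1 := Real.rpow_add_le_add_rpow (sub_nonneg.2 hab) hb hp0 hp1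
    rw [sub_add_cancel] at h1
    have h2 : 0 ≤ (a - b) ^ (q - 1) := Real.rpow_nonneg (sub_nonneg.2 hab) _
    linarith
  have key2 : ∀ a b : ℝ, 0 ≤ a → 0 ≤ b →
      |(|a| ^ (q - 2) * a) - |b| ^ (q - 2) * b| ≤ 2 * |a - b| ^ (q - 1) := by
    intro a b ha hb
    rcases le_total b a with h | h
    · exact key a b hb h
    · rw [abs_sub_comm, abs_sub_comm a b]
      exact key b a ha h
  -- Two numbers of opposite signs: both are bounded by their distance.
  have key3 : ∀ a b : ℝ, 0 ≤ a → b ≤ 0 →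
      |(|a| ^ (q - 2) * a) - |b| ^ (q - 2) * b| ≤ 2 * |a - b| ^ (q - 1) := by
    intro a b ha hb
    refine (abs_sub _ _).trans ?_
    rw [abs_rpow_sub_two_mul hq1, abs_rpow_sub_two_mul hq1]
    have hd : |a - b| = a - b := abs_of_nonneg (by linarith)
    have h1 : |a| ^ (q - 1) ≤ |a - b| ^ (q - 1) := by
      refine Real.rpow_le_rpow (abs_nonneg _) ?_ hp0
      rw [abs_of_nonneg ha, hd]; linarith
    have h2 : |b| ^ (q - 1) ≤ |a - b| ^ (q - 1) := by
      refine Real.rpow_le_rpow (abs_nonneg _) ?_ hp0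
      rw [abs_of_nonpos hb, hd]; linarith
    linarith
  rcases le_total 0 a with ha | ha <;> rcases le_total 0 b with hb | hb
  · exact key2 a b ha hb
  · exact key3 a b ha hb
  · rw [abs_sub_comm, abs_sub_comm a b]
    exact key3 b a hb ha
  · have h := key2 (-b) (-a) (by linarith) (by linarith)
    simp only [abs_neg] at h
    convert h using 2 <;> ring_nf

/-- For `0 ≤ r ≤ 2`, the power `t^r` is dominated by a constant plus a multiple of `t²`, and either
coefficient can be made small through the choice of `l`. -/
theorem rpow_le_add_mul_sq {r l t : ℝ} (hr0 : 0 ≤ r) (hr2 : r ≤ 2) (hl : 0 < l) (ht : 0 ≤ t) :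
    t ^ r ≤ l ^ r + l ^ (r - 2) * t ^ 2 := by
  rcases le_total t l with h | h
  · have h1 := Real.rpow_le_rpow ht h hr0
    have h2 : 0 ≤ l ^ (r - 2) * t ^ 2 := by positivity
    linarith
  · have ht' : 0 < t := hl.trans_le h
    have h1 : t ^ (r - 2) ≤ l ^ (r - 2) := Real.rpow_le_rpow_of_nonpos hl h (by linarith)
    have h2 : t ^ r = t ^ (r - 2) * t ^ 2 := by
      rw [← Real.rpow_natCast t 2, ← Real.rpow_add ht']; norm_num
    have h3 : 0 ≤ l ^ r := by positivity
    have h4 := mul_le_mul_of_nonneg_right h1 (sq_nonneg t)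
    linarith

theorem young_rpow_sub_two {q : ℝ} (hq : 1 < q) (a b : ℝ) :
    |a| ^ (q - 2) * a * b ≤ (1 - 1 / q) * |a| ^ q + (1 / q) * |b| ^ q := by
  have hc : (q / (q - 1)).HolderConjugate q := (Real.HolderConjugate.conjExponent hq).symm
  have h := Real.young_inequality_of_nonneg (Real.rpow_nonneg (abs_nonneg a) (q - 1))
    (abs_nonneg b) hc
  have h1 : |a| ^ (q - 2) * a * b ≤ |a| ^ (q - 1) * |b| := by
    rw [← abs_rpow_sub_two_mul hq a, ← abs_mul]
    exact le_abs_self _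
  have h2 : (|a| ^ (q - 1)) ^ (q / (q - 1)) = |a| ^ q := by
    rw [← Real.rpow_mul (abs_nonneg a), mul_div_cancel₀ _ (by linarith : q - 1 ≠ 0)]
  rw [h2] at h
  refine h1.trans (h.trans (le_of_eq ?_))
  have : q - 1 ≠ 0 := by linarith
  field_simp

theorem integrableOn_const_add_sq {N : ℕ} {Ω : Set (E N)} (hΩ : volume Ω ≠ ⊤) (u : L2E N)
    (k l : ℝ) : IntegrableOn (fun x => k + l * u x ^ 2) Ω :=
  (integrableOn_const hΩ).add ((Lp.memLp u).integrable_sq.integrableOn.const_mul l)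

theorem setIntegral_sq_le_norm_sq {N : ℕ} (Ω : Set (E N)) (u : L2E N) :
    ∫ x in Ω, u x ^ 2 ≤ ‖u‖ ^ 2 := by
  rw [norm_sq_eq_integral]
  exact setIntegral_le_integral (Lp.memLp u).integrable_sq
    (Eventually.of_forall fun x => sq_nonneg _)

theorem integrableOn_abs_rpow {N : ℕ} {Ω : Set (E N)} (hΩ : volume Ω ≠ ⊤) {r : ℝ} (hr0 : 0 ≤ r)
    (hr2 : r ≤ 2) (u : L2E N) : IntegrableOn (fun x => |u x| ^ r) Ω := by
  refine (integrableOn_const_add_sq hΩ u 1 1).mono'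
    ((measurable_coeFn u).abs.pow_const r).aestronglyMeasurable
    (Eventually.of_forall fun x => ?_)
  have h := rpow_le_add_mul_sq hr0 hr2 one_pos (abs_nonneg (u x))
  rw [Real.one_rpow, Real.one_rpow, sq_abs] at h
  rwa [Real.norm_eq_abs, abs_of_nonneg (by positivity)]

/-- A form of Hölder's inequality for the lower order powers on a set of finite measure. -/
theorem setIntegral_abs_rpow_le {N : ℕ} {Ω : Set (E N)} (hΩ : volume Ω ≠ ⊤) {r l : ℝ}
    (hr0 : 0 ≤ r) (hr2 : r ≤ 2) (hl : 0 < l) (u : L2E N) :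
    ∫ x in Ω, |u x| ^ r ≤ l ^ r * (volume Ω).toReal + l ^ (r - 2) * ‖u‖ ^ 2 := by
  calc ∫ x in Ω, |u x| ^ r ≤ ∫ x in Ω, (l ^ r + l ^ (r - 2) * u x ^ 2) := by
        refine integral_mono (integrableOn_abs_rpow hΩ hr0 hr2 u)
          (integrableOn_const_add_sq hΩ u _ _) fun x => ?_
        have h := rpow_le_add_mul_sq hr0 hr2 hl (abs_nonneg (u x))
        rwa [sq_abs] at h
    _ = l ^ r * (volume Ω).toReal + l ^ (r - 2) * ∫ x in Ω, u x ^ 2 := by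
        have hc : Integrable (fun _ => l ^ r) (volume.restrict Ω) := integrableOn_const hΩ
        have hsq : Integrable (fun x => u x ^ 2) (volume.restrict Ω) :=
          (Lp.memLp u).integrable_sq.integrableOn
        rw [integral_add hc (hsq.const_mul _), integral_const_mul, setIntegral_const, smul_eq_mul, mul_comm, Measure.real]
    _ ≤ _ := by
        gcongr
        exact setIntegral_sq_le_norm_sq Ω u

/-- `n` is the Nemytskii operator `u ↦ 1_Ω |u|^{q-2} u` on `L²(ℝ^N)`. -/
def IsNemytskii (N : ℕ) (q : ℝ) (Ω : Set (E N)) (n : L2E N → L2E N) : Prop :=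
  ∀ u : L2E N, n u =ᵐ[volume] Ω.indicator fun x => |u x| ^ (q - 2) * u x

theorem exists_isNemytskii {N : ℕ} {q : ℝ} (hq : q ∈ Set.Ioo (1:ℝ) 2) {Ω : Set (E N)}
    (hΩm : MeasurableSet Ω) (hΩ : volume Ω ≠ ⊤) : ∃ n, IsNemytskii N q Ω n := by
  obtain ⟨hq1, hq2⟩ := hq
  have h : ∀ u : L2E N, MemLp (Ω.indicator fun x => |u x| ^ (q - 2) * u x) 2 volume := by
    intro u
    have hu := measurable_coeFn u
    have hm : Measurable fun x => |u x| ^ (q - 2) * u x := (hu.abs.pow_const _).mul hu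
    rw [memLp_indicator_iff_restrict hΩm, memLp_two_iff_integrable_sq hm.aestronglyMeasurable]
    refine (integrableOn_abs_rpow hΩ (r := 2 * (q - 1)) (by linarith) (by linarith) u).congr
      (Eventually.of_forall fun x => ?_)
    simp only
    rw [← sq_abs (|u x| ^ (q - 2) * u x), abs_rpow_sub_two_mul hq1, ← Real.rpow_natCast,
      ← Real.rpow_mul (abs_nonneg _)]
    ring_nf
  exact ⟨fun u => (h u).toLp _, fun u => (h u).coeFn_toLp⟩

theorem IsNemytskii.inner_eq {N : ℕ} {q : ℝ} {Ω : Set (E N)} (hΩm : MeasurableSet Ω)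
    {n : L2E N → L2E N} (hn : IsNemytskii N q Ω n) (u v : L2E N) :
    inner ℝ (n u) v = ∫ x in Ω, |u x| ^ (q - 2) * u x * v x := by
  rw [L2.inner_def, ← integral_indicator hΩm]
  refine integral_congr_ae ?_
  filter_upwards [hn u] with x hx
  rw [hx, real_inner_comm]
  by_cases h : x ∈ Ω <;> simp [h]

theorem IsNemytskii.integrableOn {N : ℕ} {q : ℝ} {Ω : Set (E N)} (hΩm : MeasurableSet Ω)
    {n : L2E N → L2E N} (hn : IsNemytskii N q Ω n) (u v : L2E N) :
    IntegrableOn (fun x => |u x| ^ (q - 2) * u x * v x) Ω := by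
  rw [← integrable_indicator_iff hΩm]
  refine (L2.integrable_inner (𝕜 := ℝ) (n u) v).congr ?_
  filter_upwards [hn u] with x hx
  rw [hx, real_inner_comm]
  by_cases h : x ∈ Ω <;> simp [h]

theorem IsNemytskii.inner_self_eq {N : ℕ} {q : ℝ} (hq : 1 < q) {Ω : Set (E N)}
    (hΩm : MeasurableSet Ω) {n : L2E N → L2E N} (hn : IsNemytskii N q Ω n) (u : L2E N) :
    inner ℝ (n u) u = ∫ x in Ω, |u x| ^ q := by
  rw [hn.inner_eq hΩm]
  simp_rw [rpow_sub_two_mul_mul_self hq]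

theorem IsNemytskii.young {N : ℕ} {q : ℝ} (hq : q ∈ Set.Ioo (1:ℝ) 2) {Ω : Set (E N)}
    (hΩm : MeasurableSet Ω) (hΩ : volume Ω ≠ ⊤) {n : L2E N → L2E N} (hn : IsNemytskii N q Ω n)
    (u v : L2E N) :
    inner ℝ (n u) v ≤ (1 - 1 / q) * inner ℝ (n u) u + (1 / q) * inner ℝ (n v) v := by
  obtain ⟨hq1, hq2⟩ := hq
  have hi : ∀ u : L2E N, IntegrableOn (fun x => |u x| ^ q) Ω := fun u =>
    integrableOn_abs_rpow hΩ (by linarith) hq2.le u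
  rw [hn.inner_self_eq hq1 hΩm, hn.inner_self_eq hq1 hΩm, hn.inner_eq hΩm, ← integral_const_mul,
    ← integral_const_mul, ← integral_add ((hi u).const_mul _) ((hi v).const_mul _)]
  exact integral_mono (hn.integrableOn hΩm u v) (((hi u).const_mul _).add ((hi v).const_mul _))
    fun x => young_rpow_sub_two hq1 _ _

theorem IsNemytskii.coercive {N : ℕ} {q : ℝ} (hq : q ∈ Set.Ioo (1:ℝ) 2) {Ω : Set (E N)}
    (hΩm : MeasurableSet Ω) (hΩ : volume Ω ≠ ⊤) {n : L2E N → L2E N} (hn : IsNemytskii N q Ω n) :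
    ∀ η > 0, ∃ R : ℝ, ∀ u, inner ℝ (n u) u ≤ η * ‖u‖ ^ 2 + R := by
  obtain ⟨hq1, hq2⟩ := hq
  intro η hη
  -- This choice of `l` gives `l^{q-2} = η`.
  refine ⟨(η ^ (1 / (q - 2))) ^ q * (volume Ω).toReal, fun u => ?_⟩
  have h := setIntegral_abs_rpow_le hΩ (by linarith) hq2.le
    (Real.rpow_pos_of_pos hη (1 / (q - 2))) u
  rw [← Real.rpow_mul hη.le (1 / (q - 2)) (q - 2), one_div_mul_cancel (by linarith),
    Real.rpow_one] at h
  rw [hn.inner_self_eq hq1 hΩm]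
  linarith

theorem IsNemytskii.continuous {N : ℕ} {q : ℝ} (hq : q ∈ Set.Ioo (1:ℝ) 2) {Ω : Set (E N)}
    (hΩm : MeasurableSet Ω) (hΩ : volume Ω ≠ ⊤) {n : L2E N → L2E N} (hn : IsNemytskii N q Ω n) :
    Continuous n := by
  have hq' := hq
  obtain ⟨hq1, hq2⟩ := hq'
  set r := 2 * (q - 1) with hr
  have hr0 : 0 < r := by linarith
  have hr2 : r ≤ 2 := by linarith
  have hle : ∀ u v : L2E N, ‖n u - n v‖ ^ 2 ≤ 4 * ∫ x in Ω, |(u - v) x| ^ r := by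
    intro u v
    rw [norm_sq_eq_integral, ← integral_const_mul, ← integral_indicator hΩm]
    refine integral_mono_ae (Lp.memLp (n u - n v)).integrable_sq
      ((integrable_indicator_iff hΩm).2
        ((integrableOn_abs_rpow hΩ hr0.le hr2 (u - v)).const_mul 4)) ?_
    filter_upwards [hn u, hn v, Lp.coeFn_sub u v, Lp.coeFn_sub (n u) (n v)] with x h1 h2 h3 h4
    rw [h4, Pi.sub_apply, h1, h2]
    by_cases hx : x ∈ Ω
    · simp only [Set.indicator_of_mem hx, h3, Pi.sub_apply]
      have h5 := abs_rpow_sub_two_mul_sub_le hq (u x) (v x)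
      have h6 : |u x - v x| ^ r = (|u x - v x| ^ (q - 1)) ^ 2 := by
        rw [← Real.rpow_natCast, ← Real.rpow_mul (abs_nonneg _), hr]; ring_nf
      rw [h6, ← sq_abs]
      calc _ ≤ (2 * |u x - v x| ^ (q - 1)) ^ 2 := by gcongr
        _ = _ := by ring
    · simp [Set.indicator_of_notMem hx]
  rw [Metric.continuous_iff]
  intro v ε hε
  set m := (volume Ω).toReal with hm
  have hm0 : 0 ≤ m := ENNReal.toReal_nonneg
  -- `l` is chosen so that the constant part is at most `ε²/2`, then `δ` handles the rest.
  set κ := ε ^ 2 / (8 * (m + 1)) with hκ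
  have hκ0 : 0 < κ := by positivity
  set l := κ ^ (1 / r) with hl
  have hl0 : 0 < l := by positivity
  have hlr : l ^ r = κ := by
    rw [hl, ← Real.rpow_mul hκ0.le, one_div_mul_cancel hr0.ne', Real.rpow_one]
  set b := l ^ (r - 2) with hb
  have hb0 : 0 < b := by positivity
  refine ⟨√(ε ^ 2 / (8 * b)), by positivity, fun u hu => ?_⟩
  rw [dist_eq_norm] at hu ⊢
  have h1 := hle u v
  have h2 := setIntegral_abs_rpow_le hΩ hr0.le hr2 hl0 (u - v)
  rw [hlr] at h2
  have h3 : ‖u - v‖ ^ 2 < ε ^ 2 / (8 * b) := by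
    rw [← Real.sq_sqrt (by positivity : 0 ≤ ε ^ 2 / (8 * b))]
    gcongr
  have h4 : b * ‖u - v‖ ^ 2 < ε ^ 2 / 8 := by
    calc b * ‖u - v‖ ^ 2 < b * (ε ^ 2 / (8 * b)) := by gcongr
      _ = ε ^ 2 / 8 := by field_simp
  have h5 : κ * m ≤ ε ^ 2 / 8 := by
    rw [hκ, div_mul_eq_mul_div, div_le_div_iff₀ (by positivity) (by positivity)]
    nlinarith [sq_nonneg ε]
  refine lt_of_pow_lt_pow_left₀ 2 hε.le ?_
  have : 0 < ε ^ 2 := by positivity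
  linarith

/-! ### Functions, classes and convergence in measure -/

theorem exists_energySpace_of_memA {N : ℕ} (hN : 1 ≤ N) {Ω : Set (E N)} (hΩo : IsOpen Ω)
    (hΩb : Bornology.IsBounded Ω) {s q : ℝ} (hs : 0 < s) {u : E N → ℝ} (hu : memA N s q Ω u) :
    ∃ v : energySpace N s Ω, ((v : L2E N) : E N → ℝ) =ᵐ[volume] u := by
  obtain ⟨C, hC, h⟩ := lintegral_sq_le_mul_gagSq hN hΩo hΩb hs
  obtain ⟨hm, h0, hg, -⟩ := hu
  have h2 : MemLp u 2 volume := by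
    rw [memLp_two_iff_integrable_sq hm.aestronglyMeasurable,
      ← lintegral_ofReal_ne_top_iff_integrable (hm.pow_const 2).aestronglyMeasurable
        (Eventually.of_forall fun x => sq_nonneg _)]
    exact ((h u h0).trans_lt (ENNReal.mul_lt_top ENNReal.ofReal_lt_top hg)).ne
  refine ⟨⟨h2.toLp u, ?_, ?_⟩, h2.coeFn_toLp⟩
  · filter_upwards [h2.coeFn_toLp, h0] with x hx hx0 hxΩ
    rw [hx, hx0 hxΩ]
  · rwa [gagSq_congr h2.coeFn_toLp]

theorem memA_coe {N : ℕ} {Ω : Set (E N)} (hΩ : volume Ω ≠ ⊤) {s q : ℝ}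
    (hq : q ∈ Set.Ioo (1:ℝ) 2) (v : energySpace N s Ω) : memA N s q Ω (v : L2E N) :=
  ⟨measurable_coeFn _, v.2.1, v.2.2,
    integrableOn_abs_rpow hΩ (by linarith [hq.1]) hq.2.le (v : L2E N)⟩

theorem EF_coe {N : ℕ} {Ω : Set (E N)} (hΩm : MeasurableSet Ω) {s q : ℝ} (hq : 1 < q) (α : ℝ)
    {n : L2E N → L2E N} (hn : IsNemytskii N q Ω n) (v : energySpace N s Ω) :
    EF N s q α Ω (v : L2E N) =
      (1 / 2) * gagForm N s Ω v v - (α / q) * inner ℝ (n v) (v : L2E N) := by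
  rw [EF, gagForm_self, hn.inner_self_eq hq hΩm]

theorem isCritPt_coe {N : ℕ} (hN : 1 ≤ N) {Ω : Set (E N)} (hΩo : IsOpen Ω)
    (hΩb : Bornology.IsBounded Ω) {s q α : ℝ} (hs : 0 < s) (hq : q ∈ Set.Ioo (1:ℝ) 2)
    {n : L2E N → L2E N} (hn : IsNemytskii N q Ω n) (v : energySpace N s Ω)
    (hv : ∀ ψ : energySpace N s Ω, gagForm N s Ω v ψ = α * inner ℝ (n v) (ψ : L2E N)) :
    IsCritPt N s q α Ω (v : L2E N) := by
  refine ⟨memA_coe hΩb.measure_lt_top.ne hq v, fun ψ hψ => ?_⟩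
  obtain ⟨ψ', hψ'⟩ := exists_energySpace_of_memA hN hΩo hΩb hs hψ
  have h := hv ψ'
  rw [gagForm_eq_integral, hn.inner_eq hΩo.measurableSet] at h
  convert h using 1
  · refine integral_congr_ae ?_
    filter_upwards [hψ'] with x hx
    refine integral_congr_ae ?_
    filter_upwards [hψ'] with y hy
    rw [hx, hy]
  · congr 1
    refine integral_congr_ae ?_
    filter_upwards [ae_restrict_of_ae hψ'] with x hx
    rw [hx]

theorem integrableOn_min_one {N : ℕ} {Ω : Set (E N)} (hΩ : volume Ω ≠ ⊤) {u v : E N → ℝ}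
    (hu : Measurable u) (hv : Measurable v) : IntegrableOn (fun x => min 1 |u x - v x|) Ω := by
  have hc : IntegrableOn (fun _ => (1 : ℝ)) Ω (volume : Measure (E N)) := integrableOn_const hΩ
  refine hc.mono' (measurable_const.min (hu.sub hv).abs).aestronglyMeasurable
    (Eventually.of_forall fun x => ?_)
  rw [Real.norm_eq_abs, abs_of_nonneg (le_min zero_le_one (abs_nonneg _))]
  exact min_le_left _ _

/-- The distance `d₀` is Lipschitz with respect to the `L²` norm. -/
theorem abs_d0_sub_d0_le {N : ℕ} {Ω : Set (E N)} (hΩ : volume Ω ≠ ⊤) (u u' v : L2E N) :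
    |d0 N Ω u v - d0 N Ω u' v| ≤ ((volume Ω).toReal + 1) * ‖u - u'‖ := by
  rcases eq_or_ne u u' with rfl | hne
  · simp
  have hpos : 0 < ‖u - u'‖ := norm_pos_iff.2 (sub_ne_zero.2 hne)
  have h1 := setIntegral_abs_rpow_le hΩ zero_le_one one_le_two hpos (u - u')
  have h2 : ‖u - u'‖ ^ ((1 : ℝ) - 2) * ‖u - u'‖ ^ 2 = ‖u - u'‖ := by
    rw [← Real.rpow_natCast _ 2, ← Real.rpow_add hpos]
    norm_num
  rw [h2] at h1
  simp only [Real.rpow_one] at h1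
  have hi := integrableOn_min_one hΩ (measurable_coeFn u) (measurable_coeFn v)
  have hi' := integrableOn_min_one hΩ (measurable_coeFn u') (measurable_coeFn v)
  have hia : IntegrableOn (fun x => |(u - u') x|) Ω := by
    simpa using integrableOn_abs_rpow hΩ zero_le_one one_le_two (u - u')
  unfold d0
  rw [← integral_sub hi hi']
  refine abs_integral_le_integral_abs.trans ?_
  calc _ ≤ ∫ x in Ω, |(u - u') x| := by
        refine integral_mono_ae (hi.sub hi').abs hia ?_
        filter_upwards [ae_restrict_of_ae (Lp.coeFn_sub u u')] with x hx
        simp only [hx, Pi.sub_apply]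
        have h3 := abs_min_sub_min_le_max 1 |u x - v x| 1 |u' x - v x|
        rw [sub_self, abs_zero, max_eq_right (abs_nonneg _)] at h3
        refine h3.trans ((abs_abs_sub_abs_le_abs_sub _ _).trans (le_of_eq ?_))
        ring_nf
    _ ≤ _ := by linarith

theorem continuous_d0_left {N : ℕ} {Ω : Set (E N)} (hΩ : volume Ω ≠ ⊤) (v : L2E N) :
    Continuous fun u : L2E N => d0 N Ω u v := by
  refine (LipschitzWith.of_dist_le_mul
    (K := ⟨(volume Ω).toReal + 1, by positivity⟩) fun u u' => ?_).continuous
  rw [dist_eq_norm u u', Real.dist_eq]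
  exact abs_d0_sub_d0_le hΩ u u' v

theorem d0_nonneg {N : ℕ} (Ω : Set (E N)) (u v : E N → ℝ) : 0 ≤ d0 N Ω u v :=
  integral_nonneg fun _ => le_min zero_le_one (abs_nonneg _)

theorem eq_of_d0_eq_zero {N : ℕ} {s : ℝ} {Ω : Set (E N)} (hΩm : MeasurableSet Ω)
    (hΩ : volume Ω ≠ ⊤) {u v : energySpace N s Ω} (h : d0 N Ω (u : L2E N) (v : L2E N) = 0) :
    u = v := by
  have hi := integrableOn_min_one hΩ (measurable_coeFn (u : L2E N)) (measurable_coeFn (v : L2E N))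
  unfold d0 at h
  rw [integral_eq_zero_iff_of_nonneg (fun _ => le_min zero_le_one (abs_nonneg _)) hi] at h
  have h' := (ae_restrict_iff' hΩm).1 h
  refine Subtype.ext (Lp.ext ?_)
  filter_upwards [h', u.2.1, v.2.1] with x hx hu hv
  by_cases hxΩ : x ∈ Ω
  · have h1 : min 1 |(u : L2E N) x - (v : L2E N) x| = 0 := hx hxΩ
    rcases min_choice 1 |(u : L2E N) x - (v : L2E N) x| with h2 | h2
    · linarith
    · rw [h2] at h1
      exact sub_eq_zero.1 (abs_eq_zero.1 h1)
  · rw [hu hxΩ, hv hxΩ]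

/-- On a compact subset of `L²` inside the energy space, convergence in measure on `Ω` implies
convergence in `L²`. -/
theorem tendsto_of_tendsto_d0 {N : ℕ} {s : ℝ} {Ω : Set (E N)} (hΩm : MeasurableSet Ω)
    (hΩ : volume Ω ≠ ⊤) {S : Set (energySpace N s Ω)}
    (hK : IsCompact ((fun v : energySpace N s Ω => (v : L2E N)) '' S)) {ι : Type*} {l : Filter ι}
    {f : ι → energySpace N s Ω} (hf : ∀ i, f i ∈ S) (a : energySpace N s Ω)
    (h : Tendsto (fun i => d0 N Ω (f i : L2E N) (a : L2E N)) l (nhds 0)) :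
    Tendsto (fun i => (f i : L2E N)) l (nhds (a : L2E N)) := by
  rw [tendsto_nhds]
  intro U hU haU
  rcases ((fun v : energySpace N s Ω => (v : L2E N)) '' S \ U).eq_empty_or_nonempty with he | hne
  · refine Eventually.of_forall fun i => ?_
    exact Set.sdiff_eq_empty.1 he ⟨f i, hf i, rfl⟩
  obtain ⟨u, hu, hmin⟩ := (hK.diff hU).exists_isMinOn hne
    (continuous_d0_left hΩ (a : L2E N)).continuousOn
  obtain ⟨⟨u', hu'S, rfl⟩, huU⟩ := hu
  have hpos : 0 < d0 N Ω (u' : L2E N) (a : L2E N) := by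
    refine lt_of_le_of_ne (d0_nonneg _ _ _) fun h0 => huU ?_
    rw [eq_of_d0_eq_zero hΩm hΩ h0.symm]
    exact haU
  filter_upwards [h.eventually_lt_const hpos] with i hi
  by_contra hiU
  exact absurd (hmin ⟨⟨f i, hf i, rfl⟩, hiU⟩) (not_le.2 hi)

/-! ### The mountain pass level -/

/-- The mountain pass level along paths continuous in measure dominates the
first excited level `Λ₂`. -/
theorem mountain_pass_ge_lam2 (N : ℕ) (hN : 1 ≤ N) (Ω : Set (E N)) (hΩo : IsOpen Ω)
    (hΩb : Bornology.IsBounded Ω) (hΩn : Ω.Nonempty)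
    (s q α : ℝ) (hs : s ∈ Set.Ioo (0:ℝ) 1) (hq : q ∈ Set.Ioo (1:ℝ) 2) (hα : 0 < α)
    (w : E N → ℝ) (hwA : memA N s q Ω w)
    (hwpos : ∀ᵐ x : E N, x ∈ Ω → 0 < w x)
    (hwmin : EF N s q α Ω w = Lam1 N s q α Ω)
    (huniq : ∀ u : E N → ℝ, memA N s q Ω u → EF N s q α Ω u = Lam1 N s q α Ω →
      (u =ᵐ[volume] w ∨ u =ᵐ[volume] fun x => -w x))
    (z : ℝ → E N → ℝ)
    (hzA : ∀ t, 0 ≤ t → memA N s q Ω (z t))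
    (hzbd : ∃ M : ℝ, ∀ t, 0 ≤ t → (gagSq N s (z t)).toReal ≤ M)
    (hzcont : ∀ t, 0 ≤ t → ∀ ε > (0:ℝ), ∃ δ > (0:ℝ), ∀ t', 0 ≤ t' → |t' - t| < δ →
      d0 N Ω (z t') (z t) < ε)
    (hz0 : z 0 = w)
    (hzlim : Tendsto (fun t => d0 N Ω (z t) (fun x => -w x)) atTop (nhds 0)) :
    ∀ ε > (0:ℝ), ∃ t, 0 ≤ t ∧ Lam2 N s q α Ω - ε < EF N s q α Ω (z t) := by
  intro ε hε
  by_contra hcon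
  push Not at hcon
  obtain ⟨hs0, -⟩ := hs
  have hΩf : volume Ω ≠ ⊤ := hΩb.measure_lt_top.ne
  have hΩm : MeasurableSet Ω := hΩo.measurableSet
  obtain ⟨n, hn⟩ := exists_isNemytskii hq hΩm hΩf
  obtain ⟨C, hC, hP⟩ := poincare_energySpace hN hΩo hΩb hs0
  have hcomp := isCompact_gagForm_le hN hΩo hΩb hs0
  have hncont := hn.continuous hq hΩm hΩf
  obtain ⟨b₀, hb₀, hsub⟩ := isCompact_energy_sublevel hcomp hC hP hα hq.1 hncont
    (hn.coercive hq hΩm hΩf)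
  set F : energySpace N s Ω → ℝ := fun v => EF N s q α Ω (v : L2E N) with hFdef
  have hF : ∀ v, F v = (1 / 2) * gagForm N s Ω v v - (α / q) * inner ℝ (n v) (v : L2E N) :=
    fun v => EF_coe hΩm hq.1 α hn v
  simp only [← hF] at hb₀ hsub
  have hlift : ∀ {u : E N → ℝ}, memA N s q Ω u →
      ∃ v : energySpace N s Ω, ((v : L2E N) : E N → ℝ) =ᵐ[volume] u :=
    fun hu => exists_energySpace_of_memA hN hΩo hΩb hs0 hu
  -- `Λ₁` is a genuine lower bound of `F`, not a junk infimum.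
  have hm : ∀ v, Lam1 N s q α Ω ≤ F v := by
    intro v
    refine csInf_le ⟨b₀, ?_⟩ ⟨_, memA_coe hΩf hq v, rfl⟩
    rintro _ ⟨u, hu, rfl⟩
    obtain ⟨v', hv'⟩ := hlift hu
    rw [← EF_congr hv']
    exact hb₀ v'
  obtain ⟨a, ha⟩ := hlift hwA
  have hFa : F a = Lam1 N s q α Ω := (EF_congr ha).trans hwmin
  have hneg : (((-a : energySpace N s Ω) : L2E N) : E N → ℝ) =ᵐ[volume] fun x => -w x := by
    filter_upwards [Lp.coeFn_neg (a : L2E N), ha] with x h1 h2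
    rw [Submodule.coe_neg, h1, Pi.neg_apply, h2]
  have hFb : F (-a) = Lam1 N s q α Ω := by
    rw [← hFa, hF, hF, hn.inner_self_eq hq.1 hΩm, hn.inner_self_eq hq.1 hΩm]
    congr 1
    · simp
    · congr 1
      refine integral_congr_ae ?_
      filter_upwards [ae_restrict_of_ae (Lp.coeFn_neg (a : L2E N))] with x h1
      rw [Submodule.coe_neg, h1, Pi.neg_apply, abs_neg]
  have hab : a ≠ -a := by
    intro h
    have hnull : volume Ω = 0 := by
      refine measure_mono_null ?_ (ae_iff.1 (?_ : ∀ᵐ x : E N, x ∉ Ω))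
      · intro x hx hx'
        exact hx' hx
      · rw [← h] at hneg
        filter_upwards [ha, hneg, hwpos] with x h1 h2 h3 hx
        have := h3 hx
        linarith
    exact (hΩo.measure_pos volume hΩn).ne' hnull
  have hcrit : ∀ v : energySpace N s Ω, F v ≤ Lam2 N s q α Ω - ε →
      (∀ ψ : energySpace N s Ω, gagForm N s Ω v ψ = α * inner ℝ (n v) (ψ : L2E N)) →
      v = a ∨ v = -a := by
    intro v hv hvc
    have hcp := isCritPt_coe hN hΩo hΩb hs0 hq hn v hvc
    -- A critical value above `Λ₁` is at least `Λ₂`, so `v` must be a minimizer.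
    have hv1 : F v = Lam1 N s q α Ω := by
      by_contra hne
      have hlt : Lam1 N s q α Ω < F v := lt_of_le_of_ne (hm v) (Ne.symm hne)
      have : Lam2 N s q α Ω ≤ F v :=
        csInf_le ⟨Lam1 N s q α Ω, fun c hc => hc.1.le⟩ ⟨hlt, _, hcp, rfl⟩
      linarith
    rcases huniq _ hcp.1 hv1 with h | h
    · exact Or.inl (Subtype.ext (Lp.ext (h.trans ha.symm)))
    · exact Or.inr (Subtype.ext (Lp.ext (h.trans hneg.symm)))
  -- The path is extended to `t < 0` by reflection.
  choose Z hZ using fun t : ℝ => hlift (hzA |t| (abs_nonneg t))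
  have hZK : ∀ t, Z t ∈ {v | F v ≤ Lam2 N s q α Ω - ε} := fun t =>
    (EF_congr (hZ t)).le.trans (hcon |t| (abs_nonneg t))
  have hK := hsub (Lam2 N s q α Ω - ε)
  have hZcont : Continuous fun t => (Z t : L2E N) := by
    refine continuous_iff_continuousAt.2 fun t => ?_
    refine tendsto_of_tendsto_d0 hΩm hΩf hK hZK (Z t) ?_
    rw [Metric.tendsto_nhds_nhds]
    intro η hη
    obtain ⟨δ, hδ, h⟩ := hzcont |t| (abs_nonneg t) η hη
    refine ⟨δ, hδ, fun {t'} ht' => ?_⟩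
    rw [Real.dist_eq] at ht'
    rw [Real.dist_eq, sub_zero, abs_of_nonneg (d0_nonneg _ _ _), d0_congr (hZ t') (hZ t)]
    exact h |t'| (abs_nonneg _) ((abs_abs_sub_abs_le_abs_sub t' t).trans_lt ht')
  have hZlim : Tendsto (fun t => (Z t : L2E N)) atTop (nhds ((-a : energySpace N s Ω) : L2E N)) := by
    refine tendsto_of_tendsto_d0 hΩm hΩf hK hZK (-a) (hzlim.congr' ?_)
    filter_upwards [eventually_ge_atTop 0] with t ht
    have h := hZ t
    rw [abs_of_nonneg ht] at h
    exact (d0_congr h hneg).symm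
  have hZ0 : (Z 0 : L2E N) = a := by
    have h := hZ 0
    rw [abs_zero, hz0] at h
    exact Lp.ext (h.trans ha.symm)
  exact energy_sublevel_separation gagForm_symm hcomp hC hP hα hncont
    (hn.young hq hΩm hΩf) F hF hK a (-a) hab hFa hFb hm hcrit _ hZcont
    (fun t => ⟨Z t, hZK t, rfl⟩) hZ0 hZlim
end
end

section
/- Energy expansion along the segment joining the positive part to the full function: let φ ∈ A, with positive part φ⁺ and negative part φ⁻, and for τ ∈ [0,1] set σ(τ) = φ⁺ − τφ⁻. Then σ(τ) ∈ A and F(σ(τ)) = A·τ² − B·τ^q + C·τ + K, where A = (1/2)[φ⁻]_s^2, B = (α/q)∫_Ω (φ⁻)^q dx, C = 2∫_{ℝ^N}∫_{ℝ^N} φ⁺(x)φ⁻(y)/|x−y|^{N+2s} dx dy, and K = F(φ⁺). -/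
/-!
Write `σ = φ⁺ − τ φ⁻`. Since `φ⁺ φ⁻ = 0` pointwise, expanding the square gives
`(σ(x) − σ(y))² = (φ⁺(x) − φ⁺(y))² + τ² (φ⁻(x) − φ⁻(y))² + 2τ (φ⁺(x) φ⁻(y) + φ⁺(y) φ⁻(x))`,
and the two mixed terms have the same double integral by symmetry of the kernel. As every term is
nonnegative, this integrates to an identity in `[0, ∞]` (`gagSq_segment`). Its case `τ = 1`,
where `σ = φ`, shows that each of the three terms is finite, so the identity passes to real numbers
for every `τ`. The power term splits as `|σ|^q = (φ⁺)^q + τ^q (φ⁻)^q` (`abs_rpow_segment`).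
-/

open MeasureTheory ENNReal Filter

noncomputable section

/-- Pointwise expansion of `(σ x - σ y)²`, divided by a kernel value `d`. Here `a, b` are the
values of `φ` at the two points; the identity `a⁺ a⁻ = 0` leaves only the mixed products
`a⁺ b⁻` and `b⁺ a⁻`. -/
lemma sq_segment (a b τ d : ℝ) :
    ((max a 0 - τ * max (-a) 0) - (max b 0 - τ * max (-b) 0)) ^ 2 / d =
      (max a 0 - max b 0) ^ 2 / d + τ ^ 2 * ((max (-a) 0 - max (-b) 0) ^ 2 / d) +
        2 * τ * (max a 0 * max (-b) 0 / d + max b 0 * max (-a) 0 / d) := by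
  have h (t : ℝ) : max t 0 * max (-t) 0 = 0 := by
    rcases le_total t 0 with ht | ht <;> simp [ht]
  linear_combination (-2 * τ / d) * h a + (-2 * τ / d) * h b

/-- Fubini and the symmetry of the kernel identify the two mixed double integrals. -/
lemma crossI_comm (N : ℕ) (s : ℝ) (u v : E N → ℝ) (hu : Measurable u) (hv : Measurable v) :
    (∫⁻ x : E N, ∫⁻ y : E N,
      ENNReal.ofReal (u y * v x / dist x y ^ ((N : ℝ) + 2 * s))) = crossI N s u v := by
  unfold crossI
  rw [lintegral_lintegral_swap]
  · simp_rw [dist_comm]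
  · exact Measurable.aemeasurable (by unfold Function.uncurry; fun_prop)

/-- The expansion of the Gagliardo energy in `[0, ∞]`; no finiteness is needed. -/
lemma gagSq_segment (N : ℕ) (s τ : ℝ) (hτ : 0 ≤ τ) (φ : E N → ℝ) (hφ : Measurable φ) :
    gagSq N s (fun x => max (φ x) 0 - τ * max (-φ x) 0) =
      gagSq N s (fun x => max (φ x) 0) +
        ENNReal.ofReal (τ ^ 2) * gagSq N s (fun x => max (-φ x) 0) +
        ENNReal.ofReal (4 * τ) *
          crossI N s (fun x => max (φ x) 0) (fun x => max (-φ x) 0) := by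
  have hc : ENNReal.ofReal (4 * τ) *
        crossI N s (fun x => max (φ x) 0) (fun x => max (-φ x) 0) =
      ENNReal.ofReal (2 * τ) *
        (crossI N s (fun x => max (φ x) 0) (fun x => max (-φ x) 0) +
        ∫⁻ x : E N, ∫⁻ y : E N, ENNReal.ofReal
          (max (φ y) 0 * max (-φ x) 0 / dist x y ^ ((N : ℝ) + 2 * s))) := by
    rw [crossI_comm N s (fun x => max (φ x) 0) (fun x => max (-φ x) 0)
        (by fun_prop) (by fun_prop), ← two_mul, ← mul_assoc,
      show (4 * τ) = 2 * τ * 2 by ring, ENNReal.ofReal_mul (by positivity)]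
    simp
  rw [hc]
  unfold gagSq crossI
  have hd (x y : E N) : 0 ≤ dist x y ^ ((N : ℝ) + 2 * s) := by positivity
  simp_rw [sq_segment]
  have hpt (x y : E N) := by
    have h1 : 0 ≤ max (φ x) 0 := le_max_right _ _
    have h2 : 0 ≤ max (φ y) 0 := le_max_right _ _
    have h3 : 0 ≤ max (-φ x) 0 := le_max_right _ _
    have h4 : 0 ≤ max (-φ y) 0 := le_max_right _ _
    have h5 := hd x y
    exact show ENNReal.ofReal ((max (φ x) 0 - max (φ y) 0) ^ 2 / dist x y ^ ((N : ℝ) + 2 * s) +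
        τ ^ 2 * ((max (-φ x) 0 - max (-φ y) 0) ^ 2 / dist x y ^ ((N : ℝ) + 2 * s)) +
        2 * τ * (max (φ x) 0 * max (-φ y) 0 / dist x y ^ ((N : ℝ) + 2 * s) +
          max (φ y) 0 * max (-φ x) 0 / dist x y ^ ((N : ℝ) + 2 * s))) =
      ENNReal.ofReal ((max (φ x) 0 - max (φ y) 0) ^ 2 / dist x y ^ ((N : ℝ) + 2 * s)) +
      ENNReal.ofReal (τ ^ 2) *
        ENNReal.ofReal ((max (-φ x) 0 - max (-φ y) 0) ^ 2 / dist x y ^ ((N : ℝ) + 2 * s)) +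
      ENNReal.ofReal (2 * τ) *
        (ENNReal.ofReal (max (φ x) 0 * max (-φ y) 0 / dist x y ^ ((N : ℝ) + 2 * s)) +
         ENNReal.ofReal (max (φ y) 0 * max (-φ x) 0 / dist x y ^ ((N : ℝ) + 2 * s))) by
      rw [ENNReal.ofReal_add (by positivity) (by positivity),
        ENNReal.ofReal_add (by positivity) (by positivity),
        ENNReal.ofReal_mul (by positivity), ENNReal.ofReal_mul (p := 2 * τ) (by positivity),
        ENNReal.ofReal_add (by positivity) (by positivity)]
  simp_rw [hpt]
  have m1 : Measurable fun p : E N × E N => ENNReal.ofReal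
      ((max (φ p.1) 0 - max (φ p.2) 0) ^ 2 / dist p.1 p.2 ^ ((N : ℝ) + 2 * s)) := by fun_prop
  have m2 : Measurable fun p : E N × E N => ENNReal.ofReal
      ((max (-φ p.1) 0 - max (-φ p.2) 0) ^ 2 / dist p.1 p.2 ^ ((N : ℝ) + 2 * s)) := by fun_prop
  have m3 : Measurable fun p : E N × E N => ENNReal.ofReal
      (max (φ p.1) 0 * max (-φ p.2) 0 / dist p.1 p.2 ^ ((N : ℝ) + 2 * s)) := by fun_prop
  have m4 : Measurable fun p : E N × E N => ENNReal.ofReal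
      (max (φ p.2) 0 * max (-φ p.1) 0 / dist p.1 p.2 ^ ((N : ℝ) + 2 * s)) := by fun_prop
  rw [← lintegral_prod _ m1.aemeasurable, ← lintegral_prod _ m2.aemeasurable,
    ← lintegral_prod _ m3.aemeasurable, ← lintegral_prod _ m4.aemeasurable,
    ← lintegral_add_left m3, ← lintegral_const_mul _ m2,
    ← lintegral_const_mul _ (m3.fun_add m4),
    ← lintegral_add_left m1, ← lintegral_add_left (m1.fun_add (m2.const_mul _)),
    lintegral_prod]
  exact ((m1.fun_add (m2.const_mul _)).fun_add ((m3.fun_add m4).const_mul _)).aemeasurable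

/-- The power term splits because `φ⁺` and `φ⁻` have disjoint supports. -/
lemma abs_rpow_segment (a τ q : ℝ) (hτ : 0 ≤ τ) (hq : 0 < q) :
    |max a 0 - τ * max (-a) 0| ^ q = |max a 0| ^ q + τ ^ q * max (-a) 0 ^ q := by
  rcases le_total a 0 with ha | ha
  · have h : 0 ≤ -a := by linarith
    rw [max_eq_right ha, max_eq_left h, zero_sub, abs_neg, abs_of_nonneg (mul_nonneg hτ h),
      Real.mul_rpow hτ h]
    simp [Real.zero_rpow hq.ne']
  · rw [max_eq_left ha, max_eq_right (by linarith : -a ≤ 0)]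
    simp [Real.zero_rpow hq.ne']

/-- Energy expansion along the segment `σ(τ) = φ⁺ − τ φ⁻`. -/
theorem energy_expansion_segment (N : ℕ) (hN : 1 ≤ N) (Ω : Set (E N)) (hΩo : IsOpen Ω)
    (hΩb : Bornology.IsBounded Ω) (hΩn : Ω.Nonempty)
    (s q α : ℝ) (hs : s ∈ Set.Ioo (0:ℝ) 1) (hq : q ∈ Set.Ioo (1:ℝ) 2) (hα : 0 < α)
    (φ : E N → ℝ) (hφ : memA N s q Ω φ) :
    ∀ τ ∈ Set.Icc (0:ℝ) 1,
      memA N s q Ω (fun x => max (φ x) 0 - τ * max (-φ x) 0) ∧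
      EF N s q α Ω (fun x => max (φ x) 0 - τ * max (-φ x) 0) =
        (1 / 2) * (gagSq N s fun x => max (-φ x) 0).toReal * τ ^ 2 -
          ((α / q) * ∫ x in Ω, max (-φ x) 0 ^ q) * τ ^ q +
          (2 * (crossI N s (fun x => max (φ x) 0) fun x => max (-φ x) 0).toReal) * τ +
          EF N s q α Ω (fun x => max (φ x) 0) := by
  obtain ⟨hm, hz, hg, hi⟩ := hφ
  have hq0 : 0 < q := by linarith [hq.1]
  -- At `τ = 1` the segment ends at `φ`, so finiteness of `[φ]_s` bounds all three terms.
  have hφeq : (fun x => max (φ x) 0 - 1 * max (-φ x) 0) = φ := by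
    funext x
    rcases le_total (φ x) 0 with h | h <;> simp [h]
  have h1 := gagSq_segment N s 1 zero_le_one φ hm
  rw [hφeq] at h1
  rw [h1] at hg
  simp only [ENNReal.add_lt_top] at hg
  obtain ⟨⟨hgp, hgn⟩, hgc⟩ := hg
  have hgn' : gagSq N s (fun x => max (-φ x) 0) < ⊤ := by simpa using hgn
  have hgc' : crossI N s (fun x => max (φ x) 0) (fun x => max (-φ x) 0) < ⊤ := by
    rw [lt_top_iff_ne_top] at hgc ⊢
    intro h
    rw [h, ENNReal.mul_top (by simp)] at hgc
    exact hgc rfl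
  have hip : IntegrableOn (fun x => |max (φ x) 0| ^ q) Ω := by
    refine Integrable.mono' hi (Measurable.aestronglyMeasurable (by fun_prop)) (ae_of_all _ ?_)
    intro x
    rw [Real.norm_of_nonneg (by positivity)]
    refine Real.rpow_le_rpow (abs_nonneg _) ?_ hq0.le
    rw [abs_of_nonneg (le_max_right _ _)]
    exact max_le (le_abs_self _) (abs_nonneg _)
  have hin : IntegrableOn (fun x => max (-φ x) 0 ^ q) Ω := by
    refine Integrable.mono' hi (Measurable.aestronglyMeasurable (by fun_prop)) (ae_of_all _ ?_)
    intro x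
    have h0 : 0 ≤ max (-φ x) 0 := le_max_right _ _
    rw [Real.norm_of_nonneg (by positivity)]
    exact Real.rpow_le_rpow h0 (max_le (neg_le_abs _) (abs_nonneg _)) hq0.le
  intro τ hτ
  have hτ0 : 0 ≤ τ := hτ.1
  have hG := gagSq_segment N s τ hτ0 φ hm
  have t2 := ENNReal.mul_lt_top (ENNReal.ofReal_lt_top (r := τ ^ 2)) hgn'
  have t3 := ENNReal.mul_lt_top (ENNReal.ofReal_lt_top (r := 4 * τ)) hgc'
  have hpow (x : E N) := abs_rpow_segment (φ x) τ q hτ0 hq0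
  refine ⟨⟨by fun_prop, ?_, ?_, ?_⟩, ?_⟩
  · filter_upwards [hz] with x hx hxΩ
    simp [hx hxΩ]
  · rw [hG]
    exact ENNReal.add_lt_top.2 ⟨ENNReal.add_lt_top.2 ⟨hgp, t2⟩, t3⟩
  · simp_rw [hpow]
    exact hip.add (hin.const_mul _)
  · unfold EF
    simp_rw [hpow]
    rw [integral_add hip (hin.const_mul _), integral_const_mul, hG,
      ENNReal.toReal_add (ENNReal.add_lt_top.2 ⟨hgp, t2⟩).ne t3.ne,
      ENNReal.toReal_add hgp.ne t2.ne, ENNReal.toReal_mul, ENNReal.toReal_mul,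
      ENNReal.toReal_ofReal (by positivity), ENNReal.toReal_ofReal (by positivity)]
    ring
end
end

section
/- Let m > 1, and set f(t) = |t|^{m+1}/(m+1) and g(t) = |t|^{(m−1)/2}·t for t ∈ ℝ. Then for all a, b ∈ ℝ: f(a) − f(b) − |b|^{m−1}b·(a − b) ≥ (m+1)^{−3}·(g(b) − g(a))². -/
/-!
Put `p = m + 1`, `c = 1 / p ^ 3`, `A = gfun m a`, `B = gfun m b`, so that `A ^ 2 = |a| ^ p` and
`B ^ 2 = |b| ^ p`. The inequality then reads
`|b| ^ (m - 1) * b * a ≤ (1 / p - c) * A ^ 2 + (1 - 1 / p - c) * B ^ 2 + 2 * c * (A * B)`.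
If `a * b < 0`, the left side is nonpositive and the right side is nonnegative because
`2 * c ≤ 1 / p` and `2 * A * B ≥ -(A ^ 2 + B ^ 2)`. If `0 ≤ a * b`, then
`A * B = |a| ^ (p / 2) * |b| ^ (p / 2)`, the three coefficients are nonnegative with sum `1`, and
the inequality is exactly the weighted arithmetic-geometric mean inequality (`young_three`).
-/

open MeasureTheory ENNReal Filter

noncomputable section

/-- Weighted AM-GM for `x ^ p`, `y ^ p` and `x ^ (p / 2) * y ^ (p / 2)`: with these weights the
geometric mean has total exponent `1` in `x` and `p - 1` in `y`, whatever `c` is. -/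
lemma young_three {p c x y : ℝ} (hp : 2 ≤ p) (hc : 0 ≤ c) (hcp : c ≤ 1 / p)
    (hx : 0 ≤ x) (hy : 0 ≤ y) :
    y ^ (p - 1) * x ≤
      (1 / p - c) * x ^ p + (1 - 1 / p - c) * y ^ p + 2 * c * (x ^ (p / 2) * y ^ (p / 2)) := by
  have hp0 : 0 < p := by linarith
  have h2 : 1 / p ≤ 1 / 2 := one_div_le_one_div_of_le (by norm_num) hp
  have key := Real.geom_mean_le_arith_mean3_weighted (w₁ := 1 / p - c) (w₂ := 1 - 1 / p - c)
    (w₃ := 2 * c) (p₁ := x ^ p) (p₂ := y ^ p) (p₃ := x ^ (p / 2) * y ^ (p / 2))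
    (by linarith) (by linarith) (by linarith) (by positivity) (by positivity) (by positivity)
    (by ring)
  have ex : p * (1 / p - c) + p / 2 * (2 * c) = 1 := by field_simp; ring
  have ey : p * (1 - 1 / p - c) + p / 2 * (2 * c) = p - 1 := by field_simp; ring
  have hX : x ^ (p * (1 / p - c)) * x ^ (p / 2 * (2 * c)) = x := by
    rw [← Real.rpow_add_of_nonneg hx (mul_nonneg hp0.le (by linarith)) (by positivity), ex,
      Real.rpow_one]
  have hY : y ^ (p * (1 - 1 / p - c)) * y ^ (p / 2 * (2 * c)) = y ^ (p - 1) := by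
    rw [← Real.rpow_add_of_nonneg hy (mul_nonneg hp0.le (by linarith)) (by positivity), ey]
  rw [Real.mul_rpow (by positivity) (by positivity), ← Real.rpow_mul hx, ← Real.rpow_mul hy,
    ← Real.rpow_mul hx, ← Real.rpow_mul hy] at key
  rw [mul_mul_mul_comm, hX, hY] at key
  linarith

lemma abs_rpow_mul_abs {r : ℝ} (hr : 0 ≤ r) (t : ℝ) : |t| ^ r * |t| = |t| ^ (r + 1) := by
  rw [Real.rpow_add_of_nonneg (abs_nonneg t) hr zero_le_one, Real.rpow_one]

lemma gfun_sq {m : ℝ} (hm : 1 < m) (t : ℝ) : gfun m t ^ 2 = |t| ^ (m + 1) := by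
  have h : |gfun m t| = |t| ^ ((m + 1) / 2) := by
    rw [gfun, abs_mul, abs_of_nonneg (by positivity), abs_rpow_mul_abs (by linarith)]
    congr 1; ring
  rw [← sq_abs, h, ← Real.rpow_natCast, ← Real.rpow_mul (abs_nonneg t)]
  congr 1; push_cast; ring

/-- The elementary convexity-type inequality of Lemma A.1:
`f(a) − f(b) − f′(b)(a−b) ≥ (m+1)⁻³ (g(b) − g(a))²`. -/
theorem elementary_inequality (m : ℝ) (hm : 1 < m) (a b : ℝ) :
    |a| ^ (m + 1) / (m + 1) - |b| ^ (m + 1) / (m + 1) -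
        |b| ^ (m - 1) * b * (a - b) ≥
      (1 / (m + 1) ^ 3) * (gfun m b - gfun m a) ^ 2 := by
  have hp0 : 0 < m + 1 := by linarith
  set c : ℝ := 1 / (m + 1) ^ 3 with hc
  have hc0 : 0 ≤ c := by positivity
  have hcp : 2 * c ≤ 1 / (m + 1) := by
    rw [hc, mul_one_div, div_le_div_iff₀ (by positivity) hp0]
    nlinarith [mul_pos hp0 (sub_pos.2 hm), mul_pos hp0 hp0]
  have h2 : 1 / (m + 1) ≤ 1 / 2 := one_div_le_one_div_of_le (by norm_num) (by linarith)
  have hA := gfun_sq hm a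
  have hB := gfun_sq hm b
  have hb : |b| ^ (m - 1) * b * b = |b| ^ (m + 1) := by
    rw [mul_assoc, ← abs_mul_abs_self b, ← mul_assoc, abs_rpow_mul_abs (by linarith),
      abs_rpow_mul_abs (by linarith)]
    congr 1; ring
  have main : |b| ^ (m - 1) * b * a ≤ (1 / (m + 1) - c) * |a| ^ (m + 1) +
      (1 - 1 / (m + 1) - c) * |b| ^ (m + 1) + 2 * c * (gfun m a * gfun m b) := by
    rcases lt_or_ge (a * b) 0 with hab | hab
    · have h1 : |b| ^ (m - 1) * b * a ≤ 0 := by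
        have : 0 ≤ |b| ^ (m - 1) := by positivity
        nlinarith
      rw [← hA, ← hB]
      nlinarith [mul_nonneg hc0 (sq_nonneg (gfun m a + gfun m b)),
        mul_nonneg (sub_nonneg.2 hcp) (sq_nonneg (gfun m a)),
        mul_nonneg (by linarith : 0 ≤ 1 - 1 / (m + 1) - 2 * c) (sq_nonneg (gfun m b))]
    · have hab' : a * b = |a| * |b| := by rw [← abs_mul, abs_of_nonneg hab]
      have h1 : |b| ^ (m - 1) * b * a = |b| ^ (m + 1 - 1) * |a| := by
        rw [show m + 1 - 1 = m - 1 + 1 by ring, ← abs_rpow_mul_abs (by linarith)]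
        linear_combination |b| ^ (m - 1) * hab'
      have h3 : gfun m a * gfun m b = |a| ^ ((m + 1) / 2) * |b| ^ ((m + 1) / 2) := by
        rw [show (m + 1) / 2 = (m - 1) / 2 + 1 by ring, ← abs_rpow_mul_abs (by linarith),
          ← abs_rpow_mul_abs (by linarith), gfun, gfun]
        linear_combination |a| ^ ((m - 1) / 2) * |b| ^ ((m - 1) / 2) * hab'
      rw [h1, h3]
      exact young_three (by linarith) hc0 (by linarith) (abs_nonneg a) (abs_nonneg b)
  have e : c * (gfun m b - gfun m a) ^ 2 =
      c * |a| ^ (m + 1) + c * |b| ^ (m + 1) - 2 * c * (gfun m a * gfun m b) := by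
    rw [← hA, ← hB]; ring
  rw [ge_iff_le, e, mul_sub, hb, div_eq_mul_one_div, div_eq_mul_one_div (|b| ^ (m + 1))]
  linarith
end
end

section
/- Let m > 1 be a real number. Then for all a, b ∈ ℝ: (1/2)|a|^{m+1} + (1/2)|b|^{m+1} ≥ |(a+b)/2|^{m+1} + (1/8)·max{|a|^{m−1}, |b|^{m−1}}·(a − b)². -/
/-!
Both sides are symmetric in `(a, b)` and even, so assume `|b| ≤ a`; put `A = a ^ (m - 1)`, which is
then the maximum.

* If `b ≥ 0`, convexity of `t ↦ t ^ m` bounds `((a + b) / 2) ^ m` by `(a ^ m + b ^ m) / 2`, so the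
  convexity gap is at least `(a - b) (a ^ m - b ^ m) / 4`; as `b ^ m ≤ A b`, this is at least
  `A (a - b) ^ 2 / 4`.
* If `b < 0`, then `((a + b) / 2) ^ (m + 1) ≤ A ((a + b) / 2) ^ 2`, and even without the term
  `|b| ^ (m + 1)` the claim reduces to the quadratic inequality
  `a ^ 2 / 2 ≥ (a + b) ^ 2 / 4 + (a - b) ^ 2 / 8`.

The first case is `power_convexity_nonneg`, the second `power_convexity_neg`.
-/

open MeasureTheory ENNReal Filter

noncomputable section

theorem rpow_split_one {m x : ℝ} (hm : 1 < m) (hx : 0 ≤ x) : x ^ m = x ^ (m - 1) * x := by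
  have h := Real.rpow_add_one' hx (y := m - 1) (by linarith)
  rwa [sub_add_cancel] at h

theorem rpow_split_two {m x : ℝ} (hm : 1 < m) (hx : 0 ≤ x) : x ^ (m + 1) = x ^ m * x :=
  Real.rpow_add_one' hx (by linarith)

theorem power_convexity_nonneg {m a b : ℝ} (hm : 1 < m) (hb : 0 ≤ b) (hab : b ≤ a) :
    ((a + b) / 2) ^ (m + 1) + (1 / 8) * a ^ (m - 1) * (a - b) ^ 2 ≤
      (1 / 2) * a ^ (m + 1) + (1 / 2) * b ^ (m + 1) := by
  have ha : 0 ≤ a := hb.trans hab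
  have hc : 0 ≤ (a + b) / 2 := by positivity
  have hconv : ((a + b) / 2) ^ m ≤ (a ^ m + b ^ m) / 2 := by
    have h := (convexOn_rpow hm.le).2 (Set.mem_Ici.2 ha) (Set.mem_Ici.2 hb)
      (by norm_num : (0 : ℝ) ≤ 1 / 2) (by norm_num : (0 : ℝ) ≤ 1 / 2) (by norm_num)
    simp only [smul_eq_mul] at h
    rw [show (a + b) / 2 = 1 / 2 * a + 1 / 2 * b by ring]
    linarith
  have hA : 0 ≤ a ^ (m - 1) := Real.rpow_nonneg ha _
  have hbm : b ^ m ≤ a ^ (m - 1) * b := by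
    rw [rpow_split_one hm hb]
    exact mul_le_mul_of_nonneg_right (Real.rpow_le_rpow hb hab (by linarith)) hb
  have h1 := mul_le_mul_of_nonneg_right hconv hc
  have h2 := mul_le_mul_of_nonneg_left hbm (sub_nonneg.2 hab)
  have h3 := mul_nonneg hA (sq_nonneg (a - b))
  rw [rpow_split_two hm hc, rpow_split_two hm ha, rpow_split_two hm hb]
  rw [rpow_split_one hm ha] at h1 ⊢
  nlinarith

theorem power_convexity_neg {m a b : ℝ} (hm : 1 < m) (hb : b < 0) (hab : -b ≤ a) :
    ((a + b) / 2) ^ (m + 1) + (1 / 8) * a ^ (m - 1) * (a - b) ^ 2 ≤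
      (1 / 2) * a ^ (m + 1) := by
  have ha : 0 ≤ a := by linarith
  have hc : 0 ≤ (a + b) / 2 := by linarith
  have hA : 0 ≤ a ^ (m - 1) := Real.rpow_nonneg ha _
  have hcA : ((a + b) / 2) ^ (m - 1) ≤ a ^ (m - 1) :=
    Real.rpow_le_rpow hc (by linarith) (by linarith)
  have h1 := mul_le_mul_of_nonneg_right hcA (sq_nonneg ((a + b) / 2))
  -- `a ^ 2 / 2 - (a + b) ^ 2 / 4 - (a - b) ^ 2 / 8 = (a + b) (a - 3 b) / 8`
  have h2 : 0 ≤ a ^ (m - 1) * ((a + b) * (a - 3 * b)) :=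
    mul_nonneg hA (mul_nonneg (by linarith) (by linarith))
  rw [rpow_split_two hm hc, rpow_split_two hm ha, rpow_split_one hm hc, rpow_split_one hm ha]
  nlinarith

/-- The inequality when `|a|` is the larger absolute value and `a ≥ 0`. -/
theorem power_convexity_ordered {m a b : ℝ} (hm : 1 < m) (hab : |b| ≤ a) :
    |(a + b) / 2| ^ (m + 1) + (1 / 8) * max (|a| ^ (m - 1)) (|b| ^ (m - 1)) * (a - b) ^ 2 ≤
      (1 / 2) * |a| ^ (m + 1) + (1 / 2) * |b| ^ (m + 1) := by
  have ha : 0 ≤ a := (abs_nonneg b).trans hab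
  have hb' := abs_le.1 hab
  rw [abs_of_nonneg ha, abs_of_nonneg (by linarith : 0 ≤ (a + b) / 2),
    max_eq_left (Real.rpow_le_rpow (abs_nonneg b) hab (by linarith))]
  rcases le_or_gt 0 b with hb | hb
  · rw [abs_of_nonneg hb]
    exact power_convexity_nonneg hm hb hb'.2
  · have h := power_convexity_neg hm hb (by linarith : -b ≤ a)
    have hpos : 0 ≤ |b| ^ (m + 1) := Real.rpow_nonneg (abs_nonneg b) _
    linarith

/-- Strong convexity-type inequality for the power function. -/
theorem power_convexity (m : ℝ) (hm : 1 < m) (a b : ℝ) :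
    (1 / 2) * |a| ^ (m + 1) + (1 / 2) * |b| ^ (m + 1) ≥
      |(a + b) / 2| ^ (m + 1) +
        (1 / 8) * max (|a| ^ (m - 1)) (|b| ^ (m - 1)) * (a - b) ^ 2 := by
  have key : ∀ x y : ℝ, |y| ≤ |x| →
      |(x + y) / 2| ^ (m + 1) + (1 / 8) * max (|x| ^ (m - 1)) (|y| ^ (m - 1)) * (x - y) ^ 2 ≤
        (1 / 2) * |x| ^ (m + 1) + (1 / 2) * |y| ^ (m + 1) := by
    intro x y hxy
    rcases le_total 0 x with hx | hx
    · exact power_convexity_ordered hm (by rwa [abs_of_nonneg hx] at hxy)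
    · have h := power_convexity_ordered (a := -x) (b := -y) hm
        (by rwa [abs_neg, ← abs_of_nonpos hx])
      rwa [abs_neg, abs_neg, show (-x + -y) / 2 = -((x + y) / 2) by ring, abs_neg,
        show (-x - -y) ^ 2 = (x - y) ^ 2 by ring] at h
  rcases le_total |b| |a| with h | h
  · exact key a b h
  · have h' := key b a h
    rw [max_comm, add_comm b a, show (b - a) ^ 2 = (a - b) ^ 2 by ring] at h'
    linarith
end
end
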